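/- arXiv:1407.5798 — 6 statements merged into one kernel-verified Lean document; each statement's English description precedes it below -/
import Mathlib

section
/- If the parametric family Q is L₂ differentiable at ϑ ∈ Θ with L₂ derivative Λ_ϑ and Fisher information I_ϑ, then the squared Hellinger-type distance expands as ∫ (√(dQ_{ϑ+h}) − √(dQ_ϑ))² dν = ¼ hᵀ I_ϑ h + o(|h|²) as h → 0; equivalently, ∫ √(dQ_{ϑ+h} · dQ_ϑ) dν = 1 − ⅛ hᵀ I_ϑ h + o(|h|²). -/
open MeasureTheory Filter Topology

noncomputable section

/-- The squared `L²(ν)` error appearing in the defining expansion of `L₂`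
differentiability of a dominated parametric family with `ν`-densities `q ϑ`
and candidate score (`L₂` derivative) `Λ` at `ϑ`. -/
def sqErr {Ωs : Type*} [MeasurableSpace Ωs] {ι : Type*} [Fintype ι]
    (ν : Measure Ωs) (q : (ι → ℝ) → Ωs → ℝ) (ϑ : ι → ℝ) (Λ : Ωs → ι → ℝ)
    (h : ι → ℝ) : ℝ :=
  ∫ y, (Real.sqrt (q (ϑ + h) y) -
      Real.sqrt (q ϑ y) * (1 + (1 / 2) * ∑ i, Λ y i * h i)) ^ 2 ∂ν

/-- `L₂` differentiability at `ϑ` with score `Λ ∈ L₂(Q_ϑ)`: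
`‖√(dQ_{ϑ+h}) - √(dQ_ϑ)(1 + ½ Λᵀ h)‖_{L₂(ν)} = o(|h|)` as `h → 0`. -/
def IsL2Diff {Ωs : Type*} [MeasurableSpace Ωs] {ι : Type*} [Fintype ι]
    (ν : Measure Ωs) (q : (ι → ℝ) → Ωs → ℝ) (ϑ : ι → ℝ) (Λ : Ωs → ι → ℝ) : Prop :=
  Integrable (fun y => (∑ i, Λ y i ^ 2) * q ϑ y) ν ∧
    (fun h : ι → ℝ => sqErr ν q ϑ Λ h) =o[𝓝 0] fun h => ‖h‖ ^ 2

/-- Continuous `L₂` differentiability at `ϑ` with score family `Λ`: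
`L₂` differentiability at `ϑ` together with
`sup_{|t| ≤ 1} ‖√(dQ_{ϑ+h}) Λ_{ϑ+h}ᵀ t - √(dQ_ϑ) Λ_ϑᵀ t‖_{L₂(ν)} → 0` as `h → 0`. -/
def IsContL2Diff {Ωs : Type*} [MeasurableSpace Ωs] {ι : Type*} [Fintype ι]
    (ν : Measure Ωs) (q : (ι → ℝ) → Ωs → ℝ) (Λ : (ι → ℝ) → Ωs → ι → ℝ)
    (ϑ : ι → ℝ) : Prop :=
  IsL2Diff ν q ϑ (Λ ϑ) ∧
    Tendsto (fun h : ι → ℝ => ⨆ t : {t : ι → ℝ // ‖t‖ ≤ 1},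
        ∫ y, (Real.sqrt (q (ϑ + h) y) * (∑ i, Λ (ϑ + h) y i * t.1 i) -
          Real.sqrt (q ϑ y) * (∑ i, Λ ϑ y i * t.1 i)) ^ 2 ∂ν)
      (𝓝 0) (𝓝 0)


lemma hellinger_aux {Ωs : Type*} [MeasurableSpace Ωs] (ν : Measure Ωs)
    (a b L : Ωs → ℝ) (ha : Measurable a) (hb : Measurable b) (hL : Measurable L)
    (ia : Integrable (fun y => a y ^ 2) ν) (ib : Integrable (fun y => b y ^ 2) ν)
    (iL : Integrable (fun y => L y ^ 2) ν) (ε : ℝ) (hε : 0 < ε) :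
    |(∫ y, (a y - b y) ^ 2 ∂ν) - ∫ y, L y ^ 2 ∂ν| ≤
      (1 + 1 / ε) * (∫ y, (a y - (b y + L y)) ^ 2 ∂ν) + ε * ∫ y, L y ^ 2 ∂ν := by
  have iab : Integrable (fun y => (a y - b y) ^ 2) ν := by
    refine Integrable.mono' ((ia.add ib).const_mul 2) (by fun_prop) (ae_of_all _ fun y => ?_)
    rw [Real.norm_of_nonneg (sq_nonneg _)]
    simp only [Pi.add_apply]
    nlinarith [sq_nonneg (a y + b y)]
  have ir : Integrable (fun y => (a y - (b y + L y)) ^ 2) ν := by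
    refine Integrable.mono' ((iab.add iL).const_mul 2) (by fun_prop) (ae_of_all _ fun y => ?_)
    rw [Real.norm_of_nonneg (sq_nonneg _)]
    simp only [Pi.add_apply]
    nlinarith [sq_nonneg (a y - b y + L y)]
  rw [← integral_sub iab iL, ← integral_const_mul, ← integral_const_mul,
    ← integral_add (ir.const_mul _) (iL.const_mul _)]
  refine (abs_integral_le_integral_abs).trans ?_
  refine integral_mono (iab.sub iL).abs ((ir.const_mul _).add (iL.const_mul _)) fun y => ?_
  beta_reduce
  obtain ⟨r, hr⟩ : ∃ r, r = a y - (b y + L y) := ⟨_, rfl⟩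
  have h1 : a y - b y = r + L y := by rw [hr]; ring
  rw [h1, ← hr]
  have key : ∀ s : ℝ, s ^ 2 = 1 → 2 * s * r * L y ≤ 1 / ε * r ^ 2 + ε * L y ^ 2 := by
    intro s hs
    have h2 : 1 / ε * r ^ 2 + ε * L y ^ 2 - 2 * s * r * L y = 1 / ε * (r - ε * s * L y) ^ 2 := by
      field_simp
      linear_combination (-(ε ^ 2 * L y ^ 2)) * hs
    have h3 : 0 ≤ 1 / ε * (r - ε * s * L y) ^ 2 := by positivity
    linarith
  have k1 := key 1 (by norm_num)
  have k2 := key (-1) (by norm_num)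
  rw [abs_le]
  constructor <;> nlinarith [sq_nonneg r]

lemma hellinger_aux2 {Ωs : Type*} [MeasurableSpace Ωs] (ν : Measure Ωs)
    (a b : Ωs → ℝ) (ha : Measurable a) (hb : Measurable b)
    (pa : ∀ y, 0 ≤ a y) (pb : ∀ y, 0 ≤ b y)
    (ia : ∫ y, a y ∂ν = 1) (ib : ∫ y, b y ∂ν = 1) :
    ∫ y, Real.sqrt (a y * b y) ∂ν
      = 1 - 1 / 2 * ∫ y, (Real.sqrt (a y) - Real.sqrt (b y)) ^ 2 ∂ν := by
  have ja : Integrable a ν := by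
    by_contra h; rw [integral_undef h] at ia; norm_num at ia
  have jb : Integrable b ν := by
    by_contra h; rw [integral_undef h] at ib; norm_num at ib
  have hs : ∀ y, (Real.sqrt (a y) - Real.sqrt (b y)) ^ 2
      = a y + b y - 2 * Real.sqrt (a y * b y) := by
    intro y
    rw [Real.sqrt_mul (pa y)]
    linear_combination Real.sq_sqrt (pa y) + Real.sq_sqrt (pb y)
  have jab : Integrable (fun y => Real.sqrt (a y * b y)) ν := by
    refine Integrable.mono' (ja.add jb) (by fun_prop) (ae_of_all _ fun y => ?_)
    simp only [Pi.add_apply, Real.norm_eq_abs, abs_of_nonneg (Real.sqrt_nonneg _)]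
    nlinarith [hs y, sq_nonneg (Real.sqrt (a y) - Real.sqrt (b y)), Real.sqrt_nonneg (a y * b y)]
  simp_rw [hs]
  rw [integral_sub (f := fun y => a y + b y) (ja.add jb) (jab.const_mul 2), integral_add ja jb, integral_const_mul, ia, ib]
  ring

/-- **Hellinger expansion under `L₂` differentiability.** If the dominated
parametric family with `ν`-probability-densities `q ϑ'` (`ϑ' ∈ Θ`, `Θ` open) is
`L₂` differentiable at `ϑ ∈ Θ` with `L₂` derivative `Λ` and Fisher information
`I_ϑ = ∫ Λ Λᵀ dQ_ϑ`, then
`∫ (√(dQ_{ϑ+h}) - √(dQ_ϑ))² dν = ¼ hᵀ I_ϑ h + o(|h|²)` and, equivalently,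
`∫ √(dQ_{ϑ+h} dQ_ϑ) dν = 1 - ⅛ hᵀ I_ϑ h + o(|h|²)` as `h → 0`. -/
theorem hellinger_expansion
    {Ωs : Type*} [MeasurableSpace Ωs] {k : ℕ}
    (ν : Measure Ωs)
    (Θ : Set (Fin k → ℝ)) (hΘ : IsOpen Θ)
    (q : (Fin k → ℝ) → Ωs → ℝ)
    (hqmeas : ∀ ϑ' ∈ Θ, Measurable (q ϑ'))
    (hqpos : ∀ ϑ' ∈ Θ, ∀ y, 0 ≤ q ϑ' y)
    (hqprob : ∀ ϑ' ∈ Θ, ∫ y, q ϑ' y ∂ν = 1)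
    (ϑ : Fin k → ℝ) (hϑ : ϑ ∈ Θ)
    (Λ : Ωs → Fin k → ℝ)
    (hΛmeas : ∀ i, Measurable fun y => Λ y i)
    (hL2 : IsL2Diff ν q ϑ Λ) :
    ((fun h : Fin k → ℝ =>
        (∫ y, (Real.sqrt (q (ϑ + h) y) - Real.sqrt (q ϑ y)) ^ 2 ∂ν) -
          (1 / 4) * ∑ i, ∑ j, h i * (∫ y, Λ y i * Λ y j * q ϑ y ∂ν) * h j)
      =o[𝓝 0] fun h => ‖h‖ ^ 2) ∧
    ((fun h : Fin k → ℝ =>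
        (∫ y, Real.sqrt (q (ϑ + h) y * q ϑ y) ∂ν) -
          (1 - (1 / 8) * ∑ i, ∑ j, h i * (∫ y, Λ y i * Λ y j * q ϑ y ∂ν) * h j))
      =o[𝓝 0] fun h => ‖h‖ ^ 2) := by
  obtain ⟨hint, ho⟩ := hL2
  have intq : ∀ t ∈ Θ, Integrable (q t) ν := by
    intro t ht
    by_contra h
    have := hqprob t ht
    rw [integral_undef h] at this; norm_num at this
  have mq := hqmeas ϑ hϑ
  have iΛ : ∀ i j, Integrable (fun y => Λ y i * Λ y j * q ϑ y) ν := by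
    intro i j
    refine Integrable.mono' hint
      (((hΛmeas i).mul (hΛmeas j)).mul mq).aestronglyMeasurable (ae_of_all _ fun y => ?_)
    rw [Real.norm_eq_abs, abs_mul, abs_of_nonneg (hqpos ϑ hϑ y)]
    refine mul_le_mul_of_nonneg_right ?_ (hqpos ϑ hϑ y)
    have h1 := Finset.single_le_sum (f := fun i => Λ y i ^ 2)
      (fun i _ => sq_nonneg _) (Finset.mem_univ i)
    have h2 := Finset.single_le_sum (f := fun i => Λ y i ^ 2)
      (fun i _ => sq_nonneg _) (Finset.mem_univ j)
    rw [abs_le]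
    constructor <;> nlinarith [sq_nonneg (Λ y i + Λ y j), sq_nonneg (Λ y i - Λ y j)]
  let L : (Fin k → ℝ) → Ωs → ℝ := fun h y => Real.sqrt (q ϑ y) * ((1 / 2) * ∑ i, Λ y i * h i)
  have mL : ∀ h, Measurable (L h) := by
    intro h
    have : Measurable fun y => ∑ i, Λ y i * h i :=
      Finset.measurable_sum _ fun i _ => (hΛmeas i).mul_const _
    exact mq.sqrt.mul (this.const_mul _)
  have L2 : ∀ h y, L h y ^ 2 =
      (1 / 4) * ∑ i, ∑ j, h i * (Λ y i * Λ y j * q ϑ y) * h j := by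
    intro h y
    have e : ∑ i, ∑ j, h i * (Λ y i * Λ y j * q ϑ y) * h j
        = q ϑ y * ((∑ i, Λ y i * h i) * ∑ j, Λ y j * h j) := by
      rw [Finset.sum_mul_sum, Finset.mul_sum]
      refine Finset.sum_congr rfl fun i _ => ?_
      rw [Finset.mul_sum]
      refine Finset.sum_congr rfl fun j _ => ?_
      ring
    rw [e]
    simp only [L]
    rw [mul_pow, Real.sq_sqrt (hqpos ϑ hϑ y)]
    ring
  have iij : ∀ (h : Fin k → ℝ) i j,
      Integrable (fun y => h i * (Λ y i * Λ y j * q ϑ y) * h j) ν :=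
    fun h i j => ((iΛ i j).const_mul _).mul_const _
  have iL : ∀ h, Integrable (fun y => L h y ^ 2) ν := by
    intro h
    simp_rw [L2]
    exact (integrable_finsetSum _ fun i _ => integrable_finsetSum _ fun j _ =>
      iij h i j).const_mul _
  have eL : ∀ h, ∫ y, L h y ^ 2 ∂ν =
      (1 / 4) * ∑ i, ∑ j, h i * (∫ y, Λ y i * Λ y j * q ϑ y ∂ν) * h j := by
    intro h
    simp_rw [L2]
    rw [integral_const_mul, integral_finsetSum _ fun i _ =>
      integrable_finsetSum _ fun j _ => iij h i j]
    congr 1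
    refine Finset.sum_congr rfl fun i _ => ?_
    rw [integral_finsetSum _ fun j _ => iij h i j]
    refine Finset.sum_congr rfl fun j _ => ?_
    rw [integral_mul_const, integral_const_mul]
  obtain ⟨C, hC0, hC⟩ : ∃ C : ℝ, 0 < C ∧ ∀ h, ∫ y, L h y ^ 2 ∂ν ≤ C * ‖h‖ ^ 2 := by
    refine ⟨(1 / 4) * (∑ i, ∑ j, |∫ y, Λ y i * Λ y j * q ϑ y ∂ν|) + 1, ?_, fun h => ?_⟩
    · have : 0 ≤ ∑ i, ∑ j, |∫ y, Λ y i * Λ y j * q ϑ y ∂ν| :=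
        Finset.sum_nonneg fun i _ => Finset.sum_nonneg fun j _ => abs_nonneg _
      linarith
    · rw [eL]
      have : ∑ i, ∑ j, h i * (∫ y, Λ y i * Λ y j * q ϑ y ∂ν) * h j
          ≤ (∑ i, ∑ j, |∫ y, Λ y i * Λ y j * q ϑ y ∂ν|) * ‖h‖ ^ 2 := by
        rw [Finset.sum_mul]
        refine Finset.sum_le_sum fun i _ => ?_
        rw [Finset.sum_mul]
        refine Finset.sum_le_sum fun j _ => ?_
        refine (le_abs_self _).trans ?_
        rw [abs_mul, abs_mul]
        have h1 : |h i| ≤ ‖h‖ := norm_le_pi_norm h i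
        have h2 : |h j| ≤ ‖h‖ := norm_le_pi_norm h j
        calc _ = |∫ y, Λ y i * Λ y j * q ϑ y ∂ν| * (|h i| * |h j|) := by ring
          _ ≤ |∫ y, Λ y i * Λ y j * q ϑ y ∂ν| * (‖h‖ * ‖h‖) := by gcongr
          _ = _ := by ring
      nlinarith [sq_nonneg ‖h‖]
  have hev : ∀ᶠ h : Fin k → ℝ in 𝓝 0, ϑ + h ∈ Θ := by
    have hc : ContinuousAt (fun h : Fin k → ℝ => ϑ + h) 0 := by fun_prop
    exact hc.eventually_mem (by simpa using hΘ.mem_nhds hϑ)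
  have first : (fun h : Fin k → ℝ =>
        (∫ y, (Real.sqrt (q (ϑ + h) y) - Real.sqrt (q ϑ y)) ^ 2 ∂ν) -
          (1 / 4) * ∑ i, ∑ j, h i * (∫ y, Λ y i * Λ y j * q ϑ y ∂ν) * h j)
      =o[𝓝 0] fun h => ‖h‖ ^ 2 := by
    rw [Asymptotics.isLittleO_iff]
    intro c hc
    obtain ⟨ε, hε, hεC⟩ : ∃ ε : ℝ, 0 < ε ∧ ε * C = c / 2 :=
      ⟨c / 2 / C, by positivity, by field_simp⟩
    have hd : 0 < 1 + 1 / ε := by positivity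
    have ho' := (Asymptotics.isLittleO_iff.1 ho) (show 0 < c / 2 / (1 + 1 / ε) by positivity)
    filter_upwards [hev, ho'] with h hh hr
    have A := hellinger_aux ν (fun y => Real.sqrt (q (ϑ + h) y)) (fun y => Real.sqrt (q ϑ y))
      (L h) (hqmeas _ hh).sqrt mq.sqrt (mL h)
      (by simpa only [Real.sq_sqrt (hqpos _ hh _)] using intq _ hh)
      (by simpa only [Real.sq_sqrt (hqpos _ hϑ _)] using intq _ hϑ) (iL h) ε hε
    have eS : ∫ y, (Real.sqrt (q (ϑ + h) y) - (Real.sqrt (q ϑ y) + L h y)) ^ 2 ∂ν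
        = sqErr ν q ϑ Λ h := by
      unfold sqErr
      congr 1
      funext y
      simp only [L]
      ring
    rw [← eL]
    rw [eS] at A
    rw [Real.norm_eq_abs, Real.norm_of_nonneg (sq_nonneg _)] at *
    have h1 := mul_le_mul_of_nonneg_left ((le_abs_self _).trans hr) hd.le
    have h2 : (1 + 1 / ε) * (c / 2 / (1 + 1 / ε) * ‖h‖ ^ 2) = c / 2 * ‖h‖ ^ 2 := by
      rw [← mul_assoc, mul_div_cancel₀ _ hd.ne']
    have h3 := mul_le_mul_of_nonneg_left (hC h) hε.le
    rw [← mul_assoc, hεC] at h3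
    linarith
  refine ⟨first, ?_⟩
  refine (first.const_mul_left (-(1 / 2))).congr' ?_ EventuallyEq.rfl
  filter_upwards [hev] with h hh
  rw [hellinger_aux2 ν _ _ (hqmeas _ hh) mq (hqpos _ hh) (hqpos _ hϑ) (hqprob _ hh) (hqprob _ hϑ)]
  ring
end
end

section
/- Integrated Fisher information bound along a segment: Let ϑ, ϑ + h ∈ Θ and suppose that for ν-a.e. y the map u ↦ dQ_{ϑ+uh}(y) is absolutely continuous on [0,1] with derivative (d/du) dQ_{ϑ+uh}(y) = (Λ_{ϑ+uh}(y)ᵀ h) dQ_{ϑ+uh}(y) for Lebesgue-a.e. u, where I_{ϑ+uh} = ∫ Λ_{ϑ+uh} Λ_{ϑ+uh}ᵀ dQ_{ϑ+uh} is finite for each u. Then ∫ (√(dQ_{ϑ+h}) − √(dQ_ϑ))² dν ≤ ¼ ∫₀¹ hᵀ I_{ϑ+uh} h du. -/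
open MeasureTheory

noncomputable section

lemma ac_of_dist_le {f f2 : ℝ → ℝ} {a b C : ℝ} (hf : AbsolutelyContinuousOnInterval f a b)
    (hd : ∀ x ∈ Set.uIcc a b, ∀ y ∈ Set.uIcc a b, dist (f2 x) (f2 y) ≤ C * dist (f x) (f y)) :
    AbsolutelyContinuousOnInterval f2 a b := by
  have h1 := Filter.Tendsto.const_mul C hf
  rw [mul_zero] at h1
  refine squeeze_zero' (Filter.Eventually.of_forall fun E => 
    Finset.sum_nonneg fun i _ => dist_nonneg) ?_ h1
  refine Filter.Eventually.filter_mono inf_le_right ?_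
  rw [Filter.eventually_principal]
  intro E hE
  rw [Finset.mul_sum]
  exact Finset.sum_le_sum fun i hi => hd _ (hE.1 i hi).1 _ (hE.1 i hi).2

lemma sq_lintegral_le {α : Type*} [MeasurableSpace α] (μ : Measure α) [IsProbabilityMeasure μ]
    {f : α → ENNReal} (hf : AEMeasurable f μ) : (∫⁻ a, f a ∂μ) ^ 2 ≤ ∫⁻ a, f a ^ 2 ∂μ := by
  have h := ENNReal.lintegral_mul_le_Lp_mul_Lq μ Real.HolderConjugate.two_two hf
    (aemeasurable_const (b := (1 : ENNReal)))
  simp only [Pi.mul_apply, mul_one, ENNReal.one_rpow, lintegral_one, measure_univ] at h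
  calc _ ≤ ((∫⁻ a, f a ^ (2 : ℝ) ∂μ) ^ (1 / 2 : ℝ)) ^ 2 := by gcongr
    _ = _ := by
      rw [← ENNReal.rpow_natCast, ← ENNReal.rpow_mul]
      norm_num

lemma pw_eps (F g : ℝ → ℝ) (hF : ∀ s, 0 ≤ F s) (hg : IntegrableOn g (Set.Icc 0 1))
    (hFg : ∀ s ∈ Set.Icc (0 : ℝ) 1, F s = F 0 + ∫ u in (0 : ℝ)..s, g u)
    (hz : ∀ u, F u = 0 → g u = 0) (ε : ℝ) (hε : 0 < ε) :
    ENNReal.ofReal ((√(F 1 + ε) - √(F 0 + ε)) ^ 2) ≤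
      ENNReal.ofReal (1 / 4) * ∫⁻ u in Set.Icc (0 : ℝ) 1, ENNReal.ofReal (g u ^ 2 / F u) := by
  have h01 : Set.uIcc (0 : ℝ) 1 = Set.Icc 0 1 := Set.uIcc_of_le zero_le_one
  have hgi : IntervalIntegrable g volume 0 1 := by
    rw [intervalIntegrable_iff_integrableOn_Icc_of_le zero_le_one]; exact hg
  set G : ℝ → ℝ := fun s => F 0 + ∫ u in (0 : ℝ)..s, g u with hG
  have hGF : ∀ s ∈ Set.Icc (0 : ℝ) 1, G s = F s := fun s hs => (hFg s hs).symm
  have hGac : AbsolutelyContinuousOnInterval (fun s => ∫ u in (0 : ℝ)..s, g u) 0 1 :=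
    hgi.absolutelyContinuousOnInterval_intervalIntegral (by simp)
  have hac : AbsolutelyContinuousOnInterval (fun s => √(G s + ε)) 0 1 := by
    refine ac_of_dist_le (C := 1 / √ε) hGac ?_
    intro x hx y hy
    rw [h01] at hx hy
    have hGx : 0 ≤ G x := hGF x hx ▸ hF x
    have hGy : 0 ≤ G y := hGF y hy ▸ hF y
    have e1 : (∫ u in (0 : ℝ)..x, g u) - (∫ u in (0 : ℝ)..y, g u) = G x - G y := by
      simp [hG]
    rw [Real.dist_eq, Real.dist_eq, e1, one_div, inv_mul_eq_div,
      le_div_iff₀ (Real.sqrt_pos.2 hε)]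
    have e2 : G x - G y = (√(G x + ε) - √(G y + ε)) * (√(G x + ε) + √(G y + ε)) := by
      have := Real.sq_sqrt (show 0 ≤ G x + ε by positivity)
      have := Real.sq_sqrt (show 0 ≤ G y + ε by positivity)
      nlinarith
    rw [e2, abs_mul]
    refine mul_le_mul_of_nonneg_left ?_ (abs_nonneg _)
    rw [abs_of_nonneg (by positivity)]
    have : √ε ≤ √(G x + ε) := Real.sqrt_le_sqrt (by linarith)
    have := Real.sqrt_nonneg (G y + ε)
    linarith
  have hftc := hac.integral_deriv_eq_sub
  have hder : ∀ᵐ x, x ∈ Set.Icc (0 : ℝ) 1 →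
      deriv (fun s => √(G s + ε)) x = g x / (2 * √(F x + ε)) := by
    filter_upwards [hgi.ae_hasDerivAt_integral] with x hx hx1
    rw [← h01] at hx1
    have h2 := ((hx hx1 0 (by simp)).const_add (F 0)).add_const ε
    rw [h01] at hx1
    have h3 : G x + ε ≠ 0 := by
      have := hF x
      rw [hGF x hx1]; positivity
    have h4 := (HasDerivAt.sqrt h2 h3).deriv
    rw [← hGF x hx1]
    exact h4
  rw [← hGF 1 (by simp), ← hGF 0 (by simp)]
  rw [← hftc, intervalIntegral.integral_of_le zero_le_one, ← integral_Icc_eq_integral_Ioc]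
  set D := deriv (fun s => √(G s + ε)) with hD
  have hDm : Measurable D := measurable_deriv _
  have : IsProbabilityMeasure (volume.restrict (Set.Icc (0 : ℝ) 1)) := ⟨by simp⟩
  calc ENNReal.ofReal ((∫ u in Set.Icc (0 : ℝ) 1, D u) ^ 2)
      = ‖∫ u in Set.Icc (0 : ℝ) 1, D u‖ₑ ^ 2 := by
        rw [← sq_abs, ENNReal.ofReal_pow (abs_nonneg _), Real.enorm_eq_ofReal_abs]
    _ ≤ (∫⁻ u in Set.Icc (0 : ℝ) 1, ‖D u‖ₑ) ^ 2 := by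
        gcongr; exact enorm_integral_le_lintegral_enorm _
    _ ≤ ∫⁻ u in Set.Icc (0 : ℝ) 1, ‖D u‖ₑ ^ 2 := sq_lintegral_le _ hDm.enorm.aemeasurable
    _ ≤ ∫⁻ u in Set.Icc (0 : ℝ) 1, ENNReal.ofReal (1 / 4) * ENNReal.ofReal (g u ^ 2 / F u) := by
        refine lintegral_mono_ae ?_
        rw [ae_restrict_iff' measurableSet_Icc]
        filter_upwards [hder] with u hu hu1
        rw [hu hu1, Real.enorm_eq_ofReal_abs, ← ENNReal.ofReal_pow (abs_nonneg _), sq_abs,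
          ← ENNReal.ofReal_mul (by norm_num)]
        apply ENNReal.ofReal_le_ofReal
        have hFu := hF u
        rw [div_pow, mul_pow, Real.sq_sqrt (by positivity)]
        rcases hFu.eq_or_lt with h0 | h0
        · simp [hz u h0.symm]
        · rw [← mul_div_assoc, div_le_div_iff₀ (by positivity) h0]
          nlinarith [mul_nonneg (sq_nonneg (g u)) hε.le]
    _ = _ := lintegral_const_mul' _ _ ENNReal.ofReal_ne_top

lemma pw (F g : ℝ → ℝ) (hF : ∀ s, 0 ≤ F s) (hg : IntegrableOn g (Set.Icc 0 1))
    (hFg : ∀ s ∈ Set.Icc (0 : ℝ) 1, F s = F 0 + ∫ u in (0 : ℝ)..s, g u)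
    (hz : ∀ u, F u = 0 → g u = 0) :
    ENNReal.ofReal ((√(F 1) - √(F 0)) ^ 2) ≤
      ENNReal.ofReal (1 / 4) * ∫⁻ u in Set.Icc (0 : ℝ) 1, ENNReal.ofReal (g u ^ 2 / F u) := by
  have hc : Continuous fun ε : ℝ => ENNReal.ofReal ((√(F 1 + ε) - √(F 0 + ε)) ^ 2) := by
    exact ENNReal.continuous_ofReal.comp (by fun_prop)
  have ht := (hc.tendsto 0).mono_left (nhdsWithin_le_nhds (s := Set.Ioi 0))
  simp only [add_zero] at ht
  refine le_of_tendsto ht ?_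
  filter_upwards [self_mem_nhdsWithin] with ε hε
  exact pw_eps F g hF hg hFg hz ε hε

lemma main_aux {Ωs : Type*} [MeasurableSpace Ωs] (ν : Measure Ωs) [SigmaFinite ν]
    (f g S : ℝ → Ωs → ℝ) (hf : ∀ u y, 0 ≤ f u y) (hz : ∀ u y, f u y = 0 → g u y = 0)
    (hS : ∀ u y, S u y = g u y ^ 2 / f u y) (hS0 : ∀ u y, 0 ≤ S u y)
    (hfm : ∀ u, Measurable (f u)) (hgm : Measurable fun p : ℝ × Ωs => g p.1 p.2)
    (hAC : ∀ᵐ y ∂ν, IntegrableOn (fun u => g u y) (Set.Icc 0 1) ∧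
      ∀ s ∈ Set.Icc (0 : ℝ) 1, f s y = f 0 y + ∫ u in (0 : ℝ)..s, g u y)
    (hfin : ∀ u ∈ Set.Icc (0 : ℝ) 1, Integrable (fun y => S u y) ν)
    (hint : IntegrableOn (fun u : ℝ => ∫ y, S u y ∂ν) (Set.Icc 0 1)) :
    ∫ y, (√(f 1 y) - √(f 0 y)) ^ 2 ∂ν ≤
      (1 / 4) * ∫ u in Set.Icc (0 : ℝ) 1, ∫ y, S u y ∂ν := by
  set Q : ℝ → Ωs → ℝ := fun u y =>
    f 0 y + ∫ v, (if 0 < v ∧ v ≤ u then g v y else 0) with hQdef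
  have hq0 : Measurable (f 0) := hfm 0
  have hQm : Measurable fun p : ℝ × Ωs => Q p.1 p.2 := by
    have hm : Measurable fun r : (ℝ × Ωs) × ℝ =>
        if 0 < r.2 ∧ r.2 ≤ r.1.1 then g r.2 r.1.2 else 0 := by
      refine Measurable.ite ?_ ?_ measurable_const
      · exact (measurableSet_lt measurable_const measurable_snd).inter
          (measurableSet_le measurable_snd measurable_fst.fst)
      · exact hgm.comp (measurable_snd.prodMk measurable_fst.snd)
    have := (hm.stronglyMeasurable.integral_prod_right' (ν := (volume : Measure ℝ))).measurable
    exact (hq0.comp measurable_snd).add this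
  have hQq : ∀ᵐ y ∂ν, ∀ u ∈ Set.Icc (0 : ℝ) 1, Q u y = f u y := by
    filter_upwards [hAC] with y hy u hu
    rw [hy.2 u hu, intervalIntegral.integral_of_le hu.1,
      ← integral_indicator measurableSet_Ioc]
    simp only [hQdef, Set.indicator_apply, Set.mem_Ioc]
  clear_value Q
  set T : Ωs → ℝ → ENNReal := fun y u => ENNReal.ofReal (g u y ^ 2 / Q u y) with hT
  have hTm : Measurable (Function.uncurry T) := by
    have h1 : Measurable fun p : Ωs × ℝ => g p.2 p.1 := hgm.comp measurable_swap
    have h2 : Measurable fun p : Ωs × ℝ => Q p.2 p.1 := hQm.comp measurable_swap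
    have h3 : Measurable fun p : Ωs × ℝ => ENNReal.ofReal (g p.2 p.1 ^ 2 / Q p.2 p.1) :=
      ((h1.pow_const 2).div h2).ennreal_ofReal
    exact h3
  have hR0 : 0 ≤ ∫ u in Set.Icc (0 : ℝ) 1, ∫ y, S u y ∂ν :=
    integral_nonneg fun u => integral_nonneg fun y => hS0 u y
  have key : ∫⁻ y, ENNReal.ofReal ((√(f 1 y) - √(f 0 y)) ^ 2) ∂ν ≤
      ENNReal.ofReal (1 / 4 * ∫ u in Set.Icc (0 : ℝ) 1, ∫ y, S u y ∂ν) := by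
    calc _ ≤ ∫⁻ y, ENNReal.ofReal (1 / 4) * (∫⁻ u in Set.Icc (0 : ℝ) 1, T y u) ∂ν := by
          refine lintegral_mono_ae ?_
          filter_upwards [hAC, hQq] with y hy hQy
          have h1 := pw (fun u => f u y) (fun u => g u y) (fun u => hf _ y) hy.1
            hy.2 (fun u hu => hz u y hu)
          refine h1.trans_eq ?_
          congr 1
          refine setLIntegral_congr_fun measurableSet_Icc fun u hu => ?_
          simp only [hT, hQy u hu]
      _ = ENNReal.ofReal (1 / 4) * ∫⁻ y, (∫⁻ u in Set.Icc (0 : ℝ) 1, T y u) ∂ν :=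
          lintegral_const_mul' _ _ ENNReal.ofReal_ne_top
      _ = ENNReal.ofReal (1 / 4) * ∫⁻ u in Set.Icc (0 : ℝ) 1, ∫⁻ y, T y u ∂ν := by
          congr 1
          exact lintegral_lintegral_swap hTm.aemeasurable
      _ = ENNReal.ofReal (1 / 4) *
            ∫⁻ u in Set.Icc (0 : ℝ) 1, ENNReal.ofReal (∫ y, S u y ∂ν) := by
          congr 1
          refine setLIntegral_congr_fun measurableSet_Icc fun u hu => ?_
          rw [ofReal_integral_eq_lintegral_ofReal (hfin u hu)
            (Filter.Eventually.of_forall fun y => hS0 u y)]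
          refine lintegral_congr_ae ?_
          filter_upwards [hQq] with y hy
          simp only [hT, hy u hu, hS u y]
      _ = _ := by
          rw [ENNReal.ofReal_mul (by norm_num), ofReal_integral_eq_lintegral_ofReal hint
            (Filter.Eventually.of_forall fun u => integral_nonneg fun y => hS0 u y)]
  have hq1 : Measurable (f 1) := hfm 1
  have hm : Measurable fun y => (√(f 1 y) - √(f 0 y)) ^ 2 :=
    (hq1.sqrt.sub hq0.sqrt).pow_const 2
  rw [integral_eq_lintegral_of_nonneg_ae (Filter.Eventually.of_forall fun y => sq_nonneg _)
    hm.aestronglyMeasurable]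
  exact ENNReal.toReal_le_of_le_ofReal (by positivity) key

/-- **Integrated Fisher information bound along a segment.**
Suppose that for `ν`-a.e. `y` the map `u ↦ dQ_{ϑ+uh}(y)` is absolutely continuous on
`[0,1]` with derivative `(Λ_{ϑ+uh}ᵀ h) dQ_{ϑ+uh}` for a.e. `u` (expressed through the
fundamental theorem of calculus), and that the quadratic forms
`hᵀ I_{ϑ+uh} h = ∫ (Λ_{ϑ+uh}ᵀ h)² dQ_{ϑ+uh}` are finite for each `u` and integrable in `u`.
Then `∫ (√(dQ_{ϑ+h}) - √(dQ_ϑ))² dν ≤ ¼ ∫₀¹ hᵀ I_{ϑ+uh} h du`. -/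
theorem integrated_fisher_information_bound
    {Ωs : Type*} [MeasurableSpace Ωs] {k : ℕ}
    (ν : Measure Ωs) [SigmaFinite ν]
    (q : (Fin k → ℝ) → Ωs → ℝ)
    (hqpos : ∀ ϑ' y, 0 ≤ q ϑ' y)
    (Λ : (Fin k → ℝ) → Ωs → Fin k → ℝ)
    (ϑ h : Fin k → ℝ)
    (hqmeas : ∀ u : ℝ, Measurable (q (ϑ + u • h)))
    (hjm : Measurable fun p : ℝ × Ωs =>
        (∑ i, Λ (ϑ + p.1 • h) p.2 i * h i) * q (ϑ + p.1 • h) p.2)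
    -- absolute continuity of `u ↦ dQ_{ϑ+uh}(y)` on `[0,1]` with the indicated derivative
    (hAC : ∀ᵐ y ∂ν,
        IntegrableOn (fun u : ℝ => (∑ i, Λ (ϑ + u • h) y i * h i) * q (ϑ + u • h) y)
          (Set.Icc 0 1) ∧
        ∀ s ∈ Set.Icc (0 : ℝ) 1,
          q (ϑ + s • h) y =
            q ϑ y + ∫ u in (0 : ℝ)..s, (∑ i, Λ (ϑ + u • h) y i * h i) * q (ϑ + u • h) y)
    -- the Fisher information `I_{ϑ+uh}` exists (is finite) for each `u`
    (hfin : ∀ u ∈ Set.Icc (0 : ℝ) 1,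
        Integrable (fun y => (∑ i, Λ (ϑ + u • h) y i * h i) ^ 2 * q (ϑ + u • h) y) ν)
    (hint : IntegrableOn
        (fun u : ℝ => ∫ y, (∑ i, Λ (ϑ + u • h) y i * h i) ^ 2 * q (ϑ + u • h) y ∂ν)
        (Set.Icc 0 1)) :
    ∫ y, (Real.sqrt (q (ϑ + h) y) - Real.sqrt (q ϑ y)) ^ 2 ∂ν ≤
      (1 / 4) * ∫ u in Set.Icc (0 : ℝ) 1,
        ∫ y, (∑ i, Λ (ϑ + u • h) y i * h i) ^ 2 * q (ϑ + u • h) y ∂ν := by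
  have key := main_aux ν (fun u y => q (ϑ + u • h) y)
    (fun u y => (∑ i, Λ (ϑ + u • h) y i * h i) * q (ϑ + u • h) y)
    (fun u y => (∑ i, Λ (ϑ + u • h) y i * h i) ^ 2 * q (ϑ + u • h) y)
    (fun u y => hqpos _ y) (fun u y h0 => by rw [h0, mul_zero])
    (fun u y => by
      by_cases h0 : q (ϑ + u • h) y = 0
      · simp [h0]
      · field_simp)
    (fun u y => mul_nonneg (sq_nonneg _) (hqpos _ _)) hqmeas hjm
    (by simpa only [zero_smul, add_zero] using hAC) hfin hint
  simpa only [zero_smul, one_smul, add_zero] using key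
end
end

section
/- Linear regression with stochastic regressors: Let F be a probability measure on (ℝ, 𝔅) with finite Fisher information of location, i.e. sup_φ (∫ φ′(y) F(dy))² / ∫ φ(y)² F(dy) < ∞ where φ ranges over all continuously differentiable functions ℝ → ℝ with compact support (and ∫ φ² dF > 0), and let K be a probability measure on ℝ^p with ∫ |x|² K(dx) < ∞. Then the linear regression model P = {P_β(dx, dy) = F(dy − xᵀβ) K(dx) : β ∈ ℝ^p} is continuously L₂ differentiable at every β ∈ ℝ^p. -/
open MeasureTheory Filter Topology

noncomputable section

theorem riesz_aux {V E : Type*} [AddCommGroup V] [Module ℝ V] [NormedAddCommGroup E]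
    [InnerProductSpace ℝ E] [CompleteSpace E] (ι : V →ₗ[ℝ] E) (T : V →ₗ[ℝ] ℝ) (M : ℝ)
    (h : ∀ v, |T v| ≤ M * ‖ι v‖) : ∃ g : E, ∀ v, T v = inner ℝ g (ι v) := by
  obtain ⟨σ, hσ⟩ := (ι.rangeRestrict).exists_rightInverse_of_surjective (LinearMap.range_rangeRestrict ι)
  have hσ' : ∀ e, ι (σ e) = e := fun e => by
    have := congrArg (fun k => ((k e : ι.range) : E)) hσ
    simpa using this
  let T' : ι.range →L[ℝ] ℝ := (T ∘ₗ σ).mkContinuous M (fun e => by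
    have := h (σ e)
    rw [hσ'] at this
    simpa using this)
  obtain ⟨G, hG, -⟩ := exists_extension_norm_eq ι.range T'
  refine ⟨(InnerProductSpace.toDual ℝ E).symm G, fun v => ?_⟩
  rw [InnerProductSpace.toDual_symm_apply]
  have h1 := hG (ι.rangeRestrict v)
  have h2 : T' (ι.rangeRestrict v) = T (σ (ι.rangeRestrict v)) := rfl
  have h3 := h (v - σ (ι.rangeRestrict v))
  have h4 : ι (v - σ (ι.rangeRestrict v)) = 0 := by
    rw [map_sub, hσ']; simp
  rw [h4] at h3
  have h5 : T v - T (σ (ι.rangeRestrict v)) = 0 := by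
    have : |T (v - σ (ι.rangeRestrict v))| ≤ 0 := by simpa using h3
    rw [← map_sub]; exact abs_eq_zero.1 (le_antisymm this (abs_nonneg _))
  have h6 : G (ι v) = T' (ι.rangeRestrict v) := h1
  rw [h6, h2]; linarith

def Cc1 : Submodule ℝ (ℝ → ℝ) where
  carrier := {φ | ContDiff ℝ 1 φ ∧ HasCompactSupport φ}
  add_mem' := fun ha hb => ⟨ha.1.add hb.1, ha.2.add hb.2⟩
  zero_mem' := ⟨contDiff_const, HasCompactSupport.zero⟩
  smul_mem' := fun c f hf => ⟨hf.1.const_smul c, by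
    exact hf.2.smul_left (f := fun _ => c)⟩

theorem exists_score (F : Measure ℝ) [IsProbabilityMeasure F]
    (hFisher : ∃ C : ℝ, ∀ φ : ℝ → ℝ, ContDiff ℝ 1 φ → HasCompactSupport φ →
        (∫ y, deriv φ y ∂F) ^ 2 ≤ C * ∫ y, φ y ^ 2 ∂F) :
    ∃ g : ℝ → ℝ, Measurable g ∧ MemLp g 2 F ∧ ∀ φ : ℝ → ℝ, ContDiff ℝ 1 φ → HasCompactSupport φ →
      ∫ y, deriv φ y ∂F = - ∫ y, g y * φ y ∂F := by
  obtain ⟨C, hC⟩ := hFisher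
  have hmem : ∀ φ : Cc1, MemLp φ.1 2 F := fun φ =>
    φ.2.1.continuous.memLp_of_hasCompactSupport φ.2.2
  have hder : ∀ φ : Cc1, Integrable (deriv φ.1) F := fun φ =>
    (φ.2.1.continuous_deriv le_rfl).integrable_of_hasCompactSupport φ.2.2.deriv
  have hdiff : ∀ φ : Cc1, Differentiable ℝ φ.1 := fun φ => φ.2.1.differentiable one_ne_zero
  let ι : Cc1 →ₗ[ℝ] Lp ℝ 2 F :=
    { toFun := fun φ => (hmem φ).toLp φ.1
      map_add' := fun a b => rfl
      map_smul' := fun a b => rfl }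
  let T : Cc1 →ₗ[ℝ] ℝ :=
    { toFun := fun φ => ∫ y, deriv φ.1 y ∂F
      map_add' := fun a b => by
        rw [← integral_add (hder a) (hder b)]
        congr 1; ext y
        exact deriv_add (hdiff a y) (hdiff b y)
      map_smul' := fun c a => by
        simp only [RingHom.id_apply, smul_eq_mul]
        rw [← integral_const_mul]
        congr 1; ext y
        exact deriv_const_mul c (hdiff a y) }
  have key : ∀ φ : Cc1, ‖ι φ‖ ^ 2 = ∫ y, φ.1 y ^ 2 ∂F := fun φ => by
    rw [← real_inner_self_eq_norm_sq, L2.inner_def]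
    apply integral_congr_ae
    filter_upwards [(hmem φ).coeFn_toLp] with y hy
    have : (ι φ) y = φ.1 y := hy
    rw [this]; simp [sq]
  obtain ⟨g, hg⟩ := riesz_aux ι T (√ (max C 0)) (fun φ => by
    refine abs_le_of_sq_le_sq ?_ (by positivity)
    rw [mul_pow, Real.sq_sqrt (by positivity), key]
    refine (hC φ.1 φ.2.1 φ.2.2).trans ?_
    exact mul_le_mul_of_nonneg_right (le_max_left _ _) (integral_nonneg fun _ => sq_nonneg _))
  refine ⟨fun y => - g y, (Lp.stronglyMeasurable g).measurable.neg, (Lp.memLp g).neg, fun φ h1 h2 => ?_⟩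
  have := hg ⟨φ, h1, h2⟩
  rw [L2.inner_def] at this
  change ∫ y, deriv φ y ∂F = _ at this
  rw [this, ← integral_neg]
  apply integral_congr_ae
  filter_upwards [(hmem ⟨φ, h1, h2⟩).coeFn_toLp] with y hy
  have : (ι ⟨φ, h1, h2⟩) y = φ y := hy
  rw [this]; simp [mul_comm]

theorem exists_primitive (χ : ℝ → ℝ) (hc : Continuous χ) (hs : HasCompactSupport χ)
    (h0 : ∫ x, χ x = 0) : ∃ φ : ℝ → ℝ, ContDiff ℝ 1 φ ∧ HasCompactSupport φ ∧ deriv φ = χ := by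
  obtain ⟨R, hR⟩ := hs.isCompact.isBounded.subset_closedBall 0
  have hz : ∀ x, R < |x| → χ x = 0 := fun x hx => by
    by_contra h
    have := hR (subset_tsupport _ h)
    simp at this; linarith
  have hd : deriv (fun y => ∫ x in (-R-1)..y, χ x) = χ := by
    ext y; exact hc.deriv_integral _ _ _
  refine ⟨fun y => ∫ x in (-R-1)..y, χ x, ?_, ?_, hd⟩
  · rw [contDiff_one_iff_deriv, hd]
    exact ⟨fun y => (hc.integral_hasStrictDerivAt _ y).hasDerivAt.differentiableAt, hc⟩
  · refine HasCompactSupport.intro (isCompact_Icc (a := -R-1) (b := R)) fun y hy => ?_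
    rw [Set.mem_Icc, not_and_or, not_le, not_le] at hy
    rcases hy with hy | hy
    · rw [intervalIntegral.integral_congr (g := fun _ => 0)]
      · simp
      · intro x hx
        rw [Set.uIcc_of_ge hy.le] at hx
        refine hz x ?_
        have := neg_le_abs x
        linarith [hx.2]
    · rw [intervalIntegral.integral_eq_integral_of_support_subset, h0]
      intro x hx
      by_contra h
      apply hx
      rw [Set.mem_Ioc, not_and_or, not_le, not_lt] at h
      apply hz
      rcases h with h | h
      · linarith [neg_le_abs x]
      · linarith [le_abs_self x]

theorem meas_ind (F : Measure ℝ) [IsProbabilityMeasure F] (g : ℝ → ℝ) (hg : Measurable g) :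
   Measurable (fun y => ∫ x, (Set.Iic y).indicator g x ∂F) := by
  have : StronglyMeasurable (fun z : ℝ × ℝ => (Set.Iic z.1).indicator g z.2) := by
    have : (fun z : ℝ × ℝ => (Set.Iic z.1).indicator g z.2) = 
      Set.indicator {z : ℝ × ℝ | z.2 ≤ z.1} (fun z => g z.2) := by
        ext z; simp [Set.indicator]
    rw [this]
    exact ((hg.comp measurable_snd).indicator (measurableSet_le measurable_snd measurable_fst)).stronglyMeasurable
  exact this.integral_prod_right.measurable

theorem ibp (F : Measure ℝ) [IsProbabilityMeasure F] (g : ℝ → ℝ) (hg : Measurable g) 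
    (hgi : Integrable g F) (φ : ℝ → ℝ) (h1 : ContDiff ℝ 1 φ) (h2 : HasCompactSupport φ) :
    - ∫ y, g y * φ y ∂F = ∫ y, deriv φ y * ∫ x, (Set.Iic y).indicator g x ∂F := by
  have hi : Integrable (deriv φ) := 
    (h1.continuous_deriv le_rfl).integrable_of_hasCompactSupport h2.deriv
  have e : ∀ x, - (g x * φ x) = ∫ y, (Set.Iic y).indicator g x * deriv φ y := fun x => by
    have := h2.integral_Ioi_deriv_eq h1 x
    rw [← integral_Ici_eq_integral_Ioi, ← integral_indicator measurableSet_Ici] at this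
    have h3 : - (g x * φ x) = g x * (- φ x) := by ring
    rw [h3, ← this, ← integral_const_mul]
    congr 1; ext y
    by_cases h : x ≤ y <;> simp [h]
  rw [← integral_neg]
  simp_rw [e]
  rw [integral_integral_swap]
  · congr 1; ext y
    rw [integral_mul_const, mul_comm]
  · have h4 := hgi.mul_prod hi
    have h5 := h4.indicator (s := {z : ℝ × ℝ | z.1 ≤ z.2}) (measurableSet_le measurable_fst measurable_snd)
    refine h5.congr (Eventually.of_forall fun z => ?_)
    by_cases h : z.1 ≤ z.2 <;> simp [h, Function.uncurry]

theorem exists_density (F : Measure ℝ) [IsProbabilityMeasure F] (g : ℝ → ℝ) (hg : Measurable g) 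
    (hgi : Integrable g F) 
    (hφ : ∀ φ : ℝ → ℝ, ContDiff ℝ 1 φ → HasCompactSupport φ →
      ∫ y, deriv φ y ∂F = - ∫ y, g y * φ y ∂F) :
    ∃ f : ℝ → ℝ, Continuous f ∧ (∀ y, 0 ≤ f y) ∧
      F = volume.withDensity (fun y => ENNReal.ofReal (f y)) ∧ 
      Integrable (fun y => g y * f y) ∧ ∀ a b, f b - f a = ∫ y in a..b, g y * f y := by
  set G : ℝ → ℝ := fun y => ∫ x, (Set.Iic y).indicator g x ∂F with hG
  have hGm : Measurable G := meas_ind F g hg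
  set B := ∫ x, |g x| ∂F with hB
  have hGB : ∀ y, |G y| ≤ B := fun y => by
    rw [hG, hB]
    refine (abs_integral_le_integral_abs).trans ?_
    refine integral_mono_of_nonneg (Eventually.of_forall fun _ => abs_nonneg _) hgi.abs 
      (Eventually.of_forall fun x => ?_)
    by_cases h : x ≤ y <;> simp [h]
  have hB0 : 0 ≤ B := integral_nonneg fun _ => abs_nonneg _
  let bump : ContDiffBump (0:ℝ) := ⟨1, 2, one_pos, one_lt_two⟩
  set ψ0 := bump.normed volume with hψ0
  have p1 : Continuous ψ0 := bump.continuous_normed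
  have p2 : HasCompactSupport ψ0 := bump.hasCompactSupport_normed
  have p3 : ∫ x, ψ0 x = 1 := bump.integral_normed
  have hint : ∀ ψ : ℝ → ℝ, Continuous ψ → HasCompactSupport ψ → Integrable (fun y => ψ y * G y) := 
    fun ψ c s => by
      refine (c.integrable_of_hasCompactSupport s).mul_bdd (c := B) hGm.aestronglyMeasurable ?_
      exact Eventually.of_forall fun y => hGB y
  set c := ∫ x, ψ0 x ∂F - ∫ x, ψ0 x * G x with hc
  have k1 : ∀ ψ : ℝ → ℝ, Continuous ψ → HasCompactSupport ψ → 
      ∫ x, ψ x ∂F = ∫ x, ψ x * (G x + c) := fun ψ cψ sψ => by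
    set m := ∫ x, ψ x with hm
    have cχ : Continuous (fun x => ψ x - m * ψ0 x) := by fun_prop
    have sm : HasCompactSupport (fun x => m * ψ0 x) := p2.mul_left (f := fun _ => m)
    have sχ : HasCompactSupport (fun x => ψ x - m * ψ0 x) := sψ.sub sm
    have i1 := cψ.integrable_of_hasCompactSupport sψ (μ := volume)
    have i2 := p1.integrable_of_hasCompactSupport p2 (μ := volume)
    have i3 := cψ.integrable_of_hasCompactSupport sψ (μ := F)
    have i4 := p1.integrable_of_hasCompactSupport p2 (μ := F)
    obtain ⟨φ, q1, q2, q3⟩ := exists_primitive _ cχ sχ (by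
      rw [integral_sub i1 (i2.const_mul m), integral_const_mul, p3]; simp [hm])
    have := hφ φ q1 q2
    rw [ibp F g hg hgi φ q1 q2, q3] at this
    rw [integral_sub i3 (i4.const_mul m), integral_const_mul] at this
    have e : ∀ y, (ψ y - m * ψ0 y) * G y = ψ y * G y - m * (ψ0 y * G y) := fun y => by ring
    change _ = ∫ y, (ψ y - m * ψ0 y) * G y at this
    simp_rw [e] at this
    rw [integral_sub (hint ψ cψ sψ) ((hint ψ0 p1 p2).const_mul m), integral_const_mul] at this
    simp_rw [mul_add]
    rw [integral_add (hint ψ cψ sψ) (i1.mul_const c), integral_mul_const, ← hm, hc]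
    linarith
  set D := B + |c| with hD
  have hD0 : 0 ≤ D := by positivity
  have hpos : ∀ y, 0 ≤ G y + c + D := fun y => by
    have := neg_le_of_abs_le (hGB y); have := neg_abs_le c; linarith
  have hle : ∀ y, G y + c + D ≤ 2 * D := fun y => by
    have := le_of_abs_le (hGB y); have := le_abs_self c; linarith
  have hmd : Measurable fun y => ENNReal.ofReal (G y + c + D) := by fun_prop
  have hlf : IsLocallyFiniteMeasure (volume.withDensity fun y => ENNReal.ofReal (G y + c + D)) := by
    refine ⟨fun x => ⟨Metric.ball x 1, Metric.ball_mem_nhds x one_pos, ?_⟩⟩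
    rw [withDensity_apply _ Metric.isOpen_ball.measurableSet]
    calc _ ≤ ∫⁻ a in Metric.ball x 1, ENNReal.ofReal (2 * D) := 
          lintegral_mono fun y => ENNReal.ofReal_le_ofReal (hle y)
      _ < ⊤ := by
        rw [setLIntegral_const]
        exact ENNReal.mul_lt_top ENNReal.ofReal_lt_top measure_ball_lt_top
  have k2 : F + ENNReal.ofReal D • volume = volume.withDensity fun y => ENNReal.ofReal (G y + c + D) := by
    have : IsLocallyFiniteMeasure (ENNReal.ofReal D • (volume : Measure ℝ)) := by
      have : ENNReal.ofReal D • (volume : Measure ℝ) = D.toNNReal • volume := rfl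
      rw [this]; infer_instance
    have : (ENNReal.ofReal D • (volume : Measure ℝ)).Regular := inferInstance
    have : IsLocallyFiniteMeasure (F + ENNReal.ofReal D • (volume : Measure ℝ)) := by
      refine ⟨fun x => ⟨Metric.ball x 1, Metric.ball_mem_nhds x one_pos, ?_⟩⟩
      rw [Measure.add_apply]
      refine ENNReal.add_lt_top.2 ⟨measure_lt_top _ _, ?_⟩
      rw [Measure.smul_apply, smul_eq_mul]
      exact ENNReal.mul_lt_top ENNReal.ofReal_lt_top measure_ball_lt_top
    have : (F + ENNReal.ofReal D • (volume : Measure ℝ)).Regular := inferInstance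
    refine Measure.ext_of_integral_eq_on_compactlySupported fun ψ => ?_
    have cψ : Continuous (ψ : ℝ → ℝ) := ψ.continuous
    have sψ := ψ.hasCompactSupport
    rw [integral_add_measure (cψ.integrable_of_hasCompactSupport sψ)
      (cψ.integrable_of_hasCompactSupport sψ), integral_smul_measure, k1 _ cψ sψ,
      integral_withDensity_eq_integral_toReal_smul hmd (Eventually.of_forall fun _ => ENNReal.ofReal_lt_top)]
    simp only [ENNReal.toReal_ofReal hD0, ENNReal.toReal_ofReal (hpos _), smul_eq_mul]
    have i1 := cψ.integrable_of_hasCompactSupport sψ (μ := volume)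
    rw [← integral_const_mul, ← integral_add]
    · congr 1; ext y; ring
    · simp_rw [mul_add]; exact (hint _ cψ sψ).add (i1.mul_const c)
    · exact i1.const_mul D
  have hac : F ≪ volume := by
    refine Measure.AbsolutelyContinuous.trans ?_ (withDensity_absolutelyContinuous volume fun y => ENNReal.ofReal (G y + c + D))
    rw [← k2]
    exact Measure.AbsolutelyContinuous.add_right Measure.AbsolutelyContinuous.rfl _
  have hF := Measure.withDensity_rnDeriv_eq F volume hac
  have k3 : (fun y => F.rnDeriv volume y + ENNReal.ofReal D) =ᵐ[volume] fun y => ENNReal.ofReal (G y + c + D) := by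
    rw [← withDensity_eq_iff_of_sigmaFinite (by fun_prop) (by fun_prop), ← k2]
    have : (fun y => F.rnDeriv volume y + ENNReal.ofReal D) = F.rnDeriv volume + fun _ => ENNReal.ofReal D := rfl
    rw [this, withDensity_add_right _ measurable_const, hF, withDensity_const]
  have k4 : ∀ᵐ y, 0 ≤ G y + c := by
    filter_upwards [k3] with y hy
    have : ENNReal.ofReal D ≤ ENNReal.ofReal (G y + c + D) := by rw [← hy]; exact le_add_self
    rw [ENNReal.ofReal_le_ofReal_iff (hpos y)] at this
    linarith
  have k5 : F = volume.withDensity fun y => ENNReal.ofReal (G y + c) := by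
    rw [← hF]
    apply withDensity_congr_ae
    filter_upwards [k3, k4] with y h1 h2
    rw [ENNReal.ofReal_add h2 hD0] at h1
    exact (ENNReal.add_left_inj ENNReal.ofReal_ne_top).1 h1
  have hmf : Measurable fun y => ENNReal.ofReal (G y + c) := by fun_prop
  have k6 : Integrable (fun y => g y * (G y + c)) := by
    have := hgi
    rw [k5, integrable_withDensity_iff_integrable_smul' hmf (Eventually.of_forall fun _ => ENNReal.ofReal_lt_top)] at this
    refine this.congr ?_
    filter_upwards [k4] with y h
    rw [ENNReal.toReal_ofReal h, smul_eq_mul, mul_comm]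
  have k7 : ∀ y, G y = ∫ x in Set.Iic y, g x * (G x + c) := fun y => by
    change ∫ x, (Set.Iic y).indicator g x ∂F = _
    rw [integral_indicator measurableSet_Iic]
    conv_lhs => rw [k5]
    rw [restrict_withDensity measurableSet_Iic,  
      integral_withDensity_eq_integral_toReal_smul hmf (Eventually.of_forall fun _ => ENNReal.ofReal_lt_top)]
    apply integral_congr_ae
    filter_upwards [ae_restrict_of_ae k4] with y h
    rw [ENNReal.toReal_ofReal h, smul_eq_mul, mul_comm]
  have k8 : ∀ a b, (G b + c) - (G a + c) = ∫ y in a..b, g y * (G y + c) := fun a b => by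
    rw [← intervalIntegral.integral_Iic_sub_Iic k6.integrableOn k6.integrableOn, ← k7, ← k7]
    ring
  have k9 : Continuous fun y => G y + c := by
    have : (fun y => G y + c) = fun y => (G 0 + c) + ∫ x in (0:ℝ)..y, g x * (G x + c) := by
      ext y; rw [← k8]; ring
    rw [this]
    exact continuous_const.add (intervalIntegral.continuous_primitive (fun a b => k6.intervalIntegrable) 0)
  have k10 : ∀ y, 0 ≤ G y + c := by
    have : (fun y => max (G y + c) 0) = fun y => G y + c := by
      rw [← Continuous.ae_eq_iff_eq volume (by fun_prop) k9]
      filter_upwards [k4] with y h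
      exact max_eq_left h
    intro y
    rw [← congrFun this y]; exact le_max_right _ _
  exact ⟨fun y => G y + c, k9, k10, k5, k6, k8⟩

theorem sqrt_lip (ε : ℝ) (hε : 0 < ε) (x y : ℝ) (hx : 0 ≤ x) (hy : 0 ≤ y) :
    |√(x + ε) - √(y + ε)| ≤ (√ε)⁻¹ * |x - y| := by
  have h1 : √ε ≤ √(x + ε) := Real.sqrt_le_sqrt (by linarith)
  have h2 : 0 < √ε := Real.sqrt_pos.2 hε
  have h3 : 0 ≤ √(y + ε) := Real.sqrt_nonneg _
  have e : x - y = (√(x + ε) - √(y + ε)) * (√(x + ε) + √(y + ε)) := by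
    have a1 := Real.mul_self_sqrt (show 0 ≤ x + ε by linarith)
    have a2 := Real.mul_self_sqrt (show 0 ≤ y + ε by linarith)
    linear_combination a2 - a1
  rw [inv_mul_eq_div, le_div_iff₀ h2]
  conv_rhs => rw [e, abs_mul]
  gcongr
  exact (by linarith : √ε ≤ √(x + ε) + √(y + ε)).trans (le_abs_self _)

theorem sqrt_primitive (f g : ℝ → ℝ) (hf : Continuous f) (hf0 : ∀ y, 0 ≤ f y) (hg : Measurable g)
    (gi : Integrable (fun y => g y * f y)) (hfb : ∀ a b, f b - f a = ∫ y in a..b, g y * f y)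
    (hr : MemLp (fun y => g y * √(f y)) 2) (a b : ℝ) :
    √(f b) - √(f a) = ∫ y in a..b, 1 / 2 * (g y * √(f y)) := by
  have hder : ∀ᵐ y, HasDerivAt f (g y * f y) y := by
    filter_upwards [LocallyIntegrable.ae_hasDerivAt_integral gi.locallyIntegrable] with y hy
    have := (hy a).const_add (f a)
    have e : f = fun y => f a + ∫ x in a..y, g x * f x := by
      ext y; rw [← hfb]; ring
    exact this.congr_of_eventuallyEq (Eventually.of_forall fun y => congrFun e y)
  have hAC : AbsolutelyContinuousOnInterval f a b := by
    have e : f = (fun _ => f a) + fun y => ∫ x in a..y, g x * f x := by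
      ext y; simp [← hfb]
    suffices AbsolutelyContinuousOnInterval ((fun _ => f a) + fun y => ∫ x in a..y, g x * f x) a b by
      rwa [← e] at this
    refine AbsolutelyContinuousOnInterval.add ?_ ?_
    · exact (LipschitzWith.const (f a)).lipschitzOnWith.absolutelyContinuousOnInterval
    · exact gi.intervalIntegrable.absolutelyContinuousOnInterval_intervalIntegral Set.left_mem_uIcc
  have hACε : ∀ ε, 0 < ε → AbsolutelyContinuousOnInterval (fun y => √(f y + ε)) a b := by
    intro ε hε
    rw [absolutelyContinuousOnInterval_iff] at hAC ⊢
    intro η hη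
    have h2 : 0 < √ε := Real.sqrt_pos.2 hε
    obtain ⟨δ, hδ, h⟩ := hAC (√ε * η) (by positivity)
    refine ⟨δ, hδ, fun E hE hE2 => ?_⟩
    have := h E hE hE2
    calc _ ≤ ∑ i ∈ Finset.range E.1, (√ε)⁻¹ * dist (f (E.2 i).1) (f (E.2 i).2) := 
          Finset.sum_le_sum fun i _ => sqrt_lip ε hε _ _ (hf0 _) (hf0 _)
      _ = (√ε)⁻¹ * ∑ i ∈ Finset.range E.1, dist (f (E.2 i).1) (f (E.2 i).2) := by rw [Finset.mul_sum]
      _ < (√ε)⁻¹ * (√ε * η) := by gcongr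
      _ = η := by field_simp
  have hI : ∀ ε, 0 < ε → √(f b + ε) - √(f a + ε) = ∫ y in a..b, g y * f y / (2 * √(f y + ε)) := by
    intro ε hε
    rw [← (hACε ε hε).integral_deriv_eq_sub]
    apply intervalIntegral.integral_congr_ae
    filter_upwards [hder] with y hy _
    have : f y + ε ≠ 0 := by have := hf0 y; positivity
    exact ((hy.add_const ε).sqrt this).deriv
  have hε : Tendsto (fun n : ℕ => (1 / ((n:ℝ) + 1))) atTop (𝓝 0) := tendsto_one_div_add_atTop_nhds_zero_nat
  have l1 : Tendsto (fun n : ℕ => √(f b + 1 / ((n:ℝ) + 1)) - √(f a + 1 / ((n:ℝ) + 1))) atTop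
      (𝓝 (√(f b) - √(f a))) := by
    have c : Continuous fun e => √(f b + e) - √(f a + e) := by fun_prop
    have := (c.tendsto 0).comp hε
    simpa [Function.comp_def] using this
  have l2 : Tendsto (fun n : ℕ => ∫ y in a..b, g y * f y / (2 * √(f y + 1 / ((n:ℝ) + 1)))) atTop
      (𝓝 (∫ y in a..b, 1 / 2 * (g y * √(f y)))) := by
    refine intervalIntegral.tendsto_integral_filter_of_dominated_convergence (fun y => |g y * √(f y)|)
      ?_ ?_ ?_ ?_
    · exact Eventually.of_forall fun n => by
        have := hf.measurable
        exact Measurable.aestronglyMeasurable (by fun_prop)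
    · refine Eventually.of_forall fun n => Eventually.of_forall fun y _ => ?_
      set e : ℝ := 1 / ((n:ℝ) + 1)
      have he : 0 < e := by positivity
      have h0 := hf0 y
      have h1 : √(f y) ≤ √(f y + e) := Real.sqrt_le_sqrt (by linarith)
      have h2 : 0 < √(f y + e) := Real.sqrt_pos.2 (by linarith)
      rw [Real.norm_eq_abs, abs_div, abs_of_pos (by positivity : 0 < 2 * √(f y + e)),
        abs_mul, abs_mul, abs_of_nonneg h0, abs_of_nonneg (Real.sqrt_nonneg _), div_le_iff₀ (by positivity)]
      rw [mul_assoc]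
      refine mul_le_mul_of_nonneg_left ?_ (abs_nonneg _)
      have h3 := Real.mul_self_sqrt h0
      nlinarith [Real.sqrt_nonneg (f y)]
    · exact (((hr.locallyIntegrable one_le_two).integrableOn_isCompact isCompact_uIcc).intervalIntegrable (a := a) (b := b)).norm
    · refine Eventually.of_forall fun y _ => ?_
      rcases (hf0 y).eq_or_lt with h | h
      · simp [← h]
      · have c : ContinuousAt (fun e => g y * f y / (2 * √(f y + e))) 0 := by
          have : 0 < √(f y + 0) := Real.sqrt_pos.2 (by simpa using h)
          refine ContinuousAt.div (by fun_prop) (by fun_prop) (by positivity)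
        have := c.tendsto.comp hε
        have h2 : 0 < √(f y) := Real.sqrt_pos.2 h
        have e : 1 / 2 * (g y * √(f y)) = g y * f y / (2 * √(f y + 0)) := by
          rw [add_zero]
          field_simp
          rw [Real.sq_sqrt h.le]
        rw [e]
        exact this
  have l3 := l1.congr (fun n => hI _ (by positivity))
  exact tendsto_nhds_unique l3 l2

theorem transl_cont (r : ℝ → ℝ) (hr : MemLp r 2) :
    Continuous (fun τ : ℝ => ∫ y, (r (y - τ) - r y) ^ 2) ∧
    ∃ M, ∀ τ : ℝ, ∫ y, (r (y - τ) - r y) ^ 2 ≤ M := by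
  have hp : ∀ τ : ℝ, MeasurePreserving (fun y : ℝ => y - τ) volume volume :=
    fun τ => measurePreserving_sub_right volume τ
  let R : Lp ℝ 2 (volume : Measure ℝ) := hr.toLp r
  let sh : ℝ → C(ℝ, ℝ) := fun τ => ⟨fun y => y - τ, by fun_prop⟩
  have hsh : Continuous sh := ContinuousMap.continuous_of_continuous_uncurry _ (by
    change Continuous fun z : ℝ × ℝ => z.2 - z.1
    fun_prop)
  have e : ∀ τ, ∫ y, (r (y - τ) - r y) ^ 2 = ‖Lp.compMeasurePreserving (sh τ) (hp τ) R - R‖ ^ 2 := by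
    intro τ
    rw [← real_inner_self_eq_norm_sq, L2.inner_def]
    apply integral_congr_ae
    filter_upwards [Lp.coeFn_sub (Lp.compMeasurePreserving (sh τ) (hp τ) R) R, 
      Lp.coeFn_compMeasurePreserving R (hp τ), hr.coeFn_toLp, 
      (hp τ).quasiMeasurePreserving.ae hr.coeFn_toLp] with y h1 h2 h3 h4
    have h2' : (Lp.compMeasurePreserving (sh τ) (hp τ) R) y = r (y - τ) := h2.trans h4
    have h3' : R y = r y := h3
    rw [h1, Pi.sub_apply, h2', h3']
    simp [sq]
  simp_rw [e]
  refine ⟨?_, (2 * ‖R‖) ^ 2, fun τ => ?_⟩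
  · have : Continuous fun τ => Lp.compMeasurePreserving (sh τ) (hp τ) R :=
      Continuous.compMeasurePreservingLp continuous_const hsh hp (by simp)
    fun_prop
  · gcongr
    refine (norm_sub_le _ _).trans ?_
    rw [Lp.norm_compMeasurePreserving]
    linarith

theorem sq_err_bound (s r : ℝ → ℝ) (hrm : Measurable r) (hr : MemLp r 2)
    (hs : ∀ a b, s b - s a = ∫ y in a..b, r y) (t : ℝ) :
    ∫ y, (s (y - t) - s y + t * r y) ^ 2 ≤ 
      t ^ 2 * ∫ u in (0:ℝ)..1, ∫ y, (r (y - t * u) - r y) ^ 2 := by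
  obtain ⟨hDc, M, hM⟩ := transl_cont r hr
  set ρ : Measure ℝ := volume.restrict (Set.Ioc 0 1) with hρ
  have hprob : IsProbabilityMeasure ρ := ⟨by simp [hρ]⟩
  have hDi : Integrable (fun u => ∫ y, (r (y - t * u) - r y) ^ 2) ρ := by
    have : Continuous (fun u => ∫ y, (r (y - t * u) - r y) ^ 2) := 
      hDc.comp (g := fun τ => ∫ y, (r (y - τ) - r y) ^ 2) (f := fun u => t * u) (by fun_prop)
    exact (this.intervalIntegrable 0 1).1
  have hm : Measurable (fun z : ℝ × ℝ => (r (z.1 - t * z.2) - r z.1) ^ 2) := by fun_prop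
  have hint : Integrable (fun z : ℝ × ℝ => (r (z.1 - t * z.2) - r z.1) ^ 2) (volume.prod ρ) := by
    rw [integrable_prod_iff' hm.aestronglyMeasurable]
    constructor
    · refine Eventually.of_forall fun u => ?_
      have h1 : MemLp (fun y => r (y - t * u)) 2 := 
        hr.comp_measurePreserving (measurePreserving_sub_right volume (t * u))
      exact (h1.sub hr).integrable_sq
    · refine hDi.congr (Eventually.of_forall fun u => ?_)
      simp only [Real.norm_eq_abs, abs_sq]
  have hae := hint.prod_right_ae
  rw [intervalIntegral.integral_of_le zero_le_one]
  change _ ≤ t ^ 2 * ∫ u, ∫ y, (r (y - t * u) - r y) ^ 2 ∂volume ∂ρ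
  rw [← integral_integral_swap (f := fun y u => (r (y - t * u) - r y) ^ 2) hint, ← integral_const_mul]
  refine integral_mono_of_nonneg (Eventually.of_forall fun _ => sq_nonneg _) 
    (hint.integral_prod_left.const_mul _) ?_
  filter_upwards [hae] with y hy
  have hmem : MemLp (fun u => r (y - t * u) - r y) 2 ρ := 
    (memLp_two_iff_integrable_sq (Measurable.aestronglyMeasurable (by fun_prop))).2 hy
  have hi1 : Integrable (fun u => r (y - t * u) - r y) ρ := hmem.integrable one_le_two
  have hi2 : Integrable (fun u => r (y - t * u)) ρ := by
    refine (hi1.add (integrable_const (r y))).congr (Eventually.of_forall fun u => ?_)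
    simp
  have e1 : s y - s (y - t) = t * ∫ u, r (y - t * u) ∂ρ := by
    have := intervalIntegral.smul_integral_comp_sub_mul (a := 0) (b := 1) r t y
    rw [hs, hρ, ← intervalIntegral.integral_of_le zero_le_one]
    simp only [smul_eq_mul, mul_one, mul_zero, sub_zero] at this
    exact this.symm
  have e2 : s (y - t) - s y + t * r y = - (t * ∫ u, (r (y - t * u) - r y) ∂ρ) := by
    rw [integral_sub hi2 (integrable_const _)]
    simp only [integral_const, probReal_univ, smul_eq_mul, one_mul]
    linarith
  rw [e2, neg_sq, mul_pow]
  refine mul_le_mul_of_nonneg_left ?_ (sq_nonneg _)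
  exact ConvexOn.map_integral_le (even_two.convexOn_pow (𝕜 := ℝ)) (by fun_prop) isClosed_univ 
    (Eventually.of_forall fun _ => Set.mem_univ _) hi1 hy

theorem prod_bound {X : Type*} [MeasurableSpace X] (K : Measure X) [SFinite K] (H : X × ℝ → ℝ)
    (N : X → ℝ) (hH : ∀ z, 0 ≤ H z) (hN0 : ∀ x, 0 ≤ N x) (hN : Integrable N K) 
    (hb : ∀ x, ∫ y, H (x, y) ≤ N x) : ∫ z, H z ∂(K.prod volume) ≤ ∫ x, N x ∂K := by
  by_cases hi : Integrable H (K.prod volume)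
  · rw [integral_prod _ hi]
    exact integral_mono_of_nonneg (Eventually.of_forall fun x => integral_nonneg fun y => hH _) hN
      (Eventually.of_forall hb)
  · rw [integral_undef hi]; exact integral_nonneg hN0

theorem dot_sq {p : ℕ} (x h : Fin p → ℝ) : (∑ i, x i * h i) ^ 2 ≤ (p * ∑ i, x i ^ 2) * ‖h‖ ^ 2 := by
  refine (Finset.sum_mul_sq_le_sq_mul_sq _ _ _).trans ?_
  have : ∑ i, h i ^ 2 ≤ p * ‖h‖ ^ 2 := by
    calc ∑ i, h i ^ 2 ≤ ∑ i : Fin p, ‖h‖ ^ 2 := Finset.sum_le_sum fun i _ => by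
          rw [← sq_abs]; gcongr; exact norm_le_pi_norm h i
      _ = _ := by simp
  calc _ ≤ (∑ i, x i ^ 2) * (p * ‖h‖ ^ 2) := mul_le_mul_of_nonneg_left this (Finset.sum_nonneg fun _ _ => sq_nonneg _)
    _ = _ := by ring

theorem tendsto_W {p : ℕ} (K : Measure (Fin p → ℝ)) [IsProbabilityMeasure K]
    (hK : Integrable (fun x : Fin p → ℝ => ∑ i, x i ^ 2) K) (W : ℝ → ℝ) (hW : Continuous W)
    (hW0 : ∀ t, 0 ≤ W t) (M : ℝ) (hM : ∀ t, W t ≤ M) (h0 : W 0 = 0) :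
    (∀ h : Fin p → ℝ, Integrable (fun x => (p * ∑ i, x i ^ 2) * W (∑ i, x i * h i)) K) ∧ 
    Tendsto (fun h : Fin p → ℝ => ∫ x, (p * ∑ i, x i ^ 2) * W (∑ i, x i * h i) ∂K) (𝓝 0) (𝓝 0) := by
  have hmeas : ∀ h : Fin p → ℝ, AEStronglyMeasurable (fun x => (p * ∑ i, x i ^ 2) * W (∑ i, x i * h i)) K :=
    fun h => Continuous.aestronglyMeasurable (by fun_prop)
  have hbd : ∀ x h : Fin p → ℝ, ‖(p * ∑ i, x i ^ 2) * W (∑ i, x i * h i)‖ ≤ (p * ∑ i, x i ^ 2) * M := fun x h => by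
    have n0 : 0 ≤ (p * ∑ i, x i ^ 2) := mul_nonneg (by positivity) (Finset.sum_nonneg fun _ _ => sq_nonneg _)
    rw [Real.norm_eq_abs, abs_of_nonneg (mul_nonneg n0 (hW0 _))]
    exact mul_le_mul_of_nonneg_left (hM _) n0
  have hbi : Integrable (fun x : Fin p → ℝ => (p * ∑ i, x i ^ 2) * M) K := (hK.const_mul _).mul_const _
  refine ⟨fun h => hbi.mono' (hmeas h) (Eventually.of_forall fun x => hbd x h), ?_⟩
  have := tendsto_integral_filter_of_dominated_convergence (μ := K) (l := 𝓝 (0 : Fin p → ℝ)) 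
    (F := fun h x => (p * ∑ i, x i ^ 2) * W (∑ i, x i * h i)) (f := fun _ => 0) _ 
    (Eventually.of_forall hmeas) (Eventually.of_forall fun h => Eventually.of_forall fun x => hbd x h) hbi
    (Eventually.of_forall fun x => by
      have c : Continuous fun h : Fin p → ℝ => (p * ∑ i, x i ^ 2) * W (∑ i, x i * h i) := by fun_prop
      have := c.tendsto 0
      simpa [h0] using this)
  simpa using this

theorem main_aux_s8 {p : ℕ} (K : Measure (Fin p → ℝ)) [IsProbabilityMeasure K]
    (hK : Integrable (fun x : Fin p → ℝ => ∑ i, x i ^ 2) K) (f g : ℝ → ℝ) (hg : Measurable g)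
    (hf : Continuous f) (hf0 : ∀ y, 0 ≤ f y) (hr : MemLp (fun y => 1 / 2 * (g y * √(f y))) 2)
    (hs : ∀ a b, √(f b) - √(f a) = ∫ y in a..b, 1 / 2 * (g y * √(f y))) (β : Fin p → ℝ) :
    IsContL2Diff (K.prod MeasureTheory.volume)
          (fun β' (z : (Fin p → ℝ) × ℝ) => f (z.2 - ∑ i, z.1 i * β' i))
          (fun β' (z : (Fin p → ℝ) × ℝ) i => (- g (z.2 - ∑ j, z.1 j * β' j)) * z.1 i)
          β := by
  set r : ℝ → ℝ := fun y => 1 / 2 * (g y * √(f y)) with hrdef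
  set s : ℝ → ℝ := fun y => √(f y) with hsdef
  have hfm := hf.measurable
  have hrm : Measurable r := by fun_prop
  have hs' : ∀ a b, s b - s a = ∫ y in a..b, r y := hs
  obtain ⟨hDc, M, hM⟩ := transl_cont r hr
  set D : ℝ → ℝ := fun τ => ∫ y, (r (y - τ) - r y) ^ 2 with hD
  have hD0 : ∀ τ, 0 ≤ D τ := fun τ => integral_nonneg fun _ => sq_nonneg _
  have hDz : D 0 = 0 := by simp [hD]
  set ω : ℝ → ℝ := fun t => ∫ u in (0:ℝ)..1, D (t * u) with hω
  have hωc : Continuous ω := 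
    intervalIntegral.continuous_parametric_intervalIntegral_of_continuous' (by fun_prop) 0 1
  have hω0 : ∀ t, 0 ≤ ω t := fun t => intervalIntegral.integral_nonneg zero_le_one fun u _ => hD0 _
  have hωz : ω 0 = 0 := by simp [hω, hDz]
  have hωM : ∀ t, ω t ≤ M := fun t => by
    have : ω t ≤ ∫ u in (0:ℝ)..1, M := intervalIntegral.integral_mono_on zero_le_one
      (Continuous.intervalIntegrable (by fun_prop) _ _) (by simp) fun u _ => hM _
    simpa using this
  have hΨ : ∀ t, ∫ y, (s (y - t) - s y + t * r y) ^ 2 ≤ t ^ 2 * ω t := sq_err_bound s r hrm hr hs'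
  obtain ⟨I1, T1⟩ := tendsto_W K hK ω hωc hω0 M hωM hωz
  obtain ⟨I2, T2⟩ := tendsto_W K hK D hDc hD0 M hM hDz
  have hN0 : ∀ x : Fin p → ℝ, 0 ≤ (p * ∑ i, x i ^ 2) := fun x => 
    mul_nonneg (by positivity) (Finset.sum_nonneg fun _ _ => sq_nonneg _)
  have hdot : ∀ x h : Fin p → ℝ, ∑ i, x i * (β + h) i = ∑ i, x i * β i + ∑ i, x i * h i := fun x h => by
    simp [mul_add, Finset.sum_add_distrib]
  refine ⟨⟨?_, ?_⟩, ?_⟩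
  · have e : (fun z : (Fin p → ℝ) × ℝ => (∑ i, (- g (z.2 - ∑ j, z.1 j * β j) * z.1 i) ^ 2) * 
        f (z.2 - ∑ i, z.1 i * β i)) = fun z => (∑ i, z.1 i ^ 2) * (4 * r (z.2 - ∑ i, z.1 i * β i) ^ 2) := by
      ext z
      simp only [mul_pow, hrdef, Real.sq_sqrt (hf0 _), ← Finset.mul_sum]
      ring
    rw [e]
    have hr2 : Integrable (fun y => r y ^ 2) := hr.integrable_sq
    rw [integrable_prod_iff (Measurable.aestronglyMeasurable (by fun_prop))]
    constructor
    · refine Eventually.of_forall fun x => ?_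
      exact ((hr2.comp_sub_right (∑ i, x i * β i)).const_mul 4).const_mul (∑ i, x i ^ 2)
    · have e2 : (fun x : Fin p → ℝ => ∫ y, ‖(∑ i, x i ^ 2) * (4 * r (y - ∑ i, x i * β i) ^ 2)‖) = 
          fun x => (∑ i, x i ^ 2) * (4 * ∫ y, r y ^ 2) := by
        ext x
        have : ∀ y, ‖(∑ i, x i ^ 2) * (4 * r (y - ∑ i, x i * β i) ^ 2)‖ = 
            (∑ i, x i ^ 2) * (4 * r (y - ∑ i, x i * β i) ^ 2) := fun y => by
          rw [Real.norm_eq_abs, abs_of_nonneg]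
          exact mul_nonneg (Finset.sum_nonneg fun _ _ => sq_nonneg _) (by positivity)
        simp_rw [this]
        rw [integral_const_mul, integral_const_mul, integral_sub_right_eq_self (fun y => r y ^ 2)]
      simp only [e2]
      exact hK.mul_const _
  · have key : ∀ h : Fin p → ℝ, sqErr (K.prod MeasureTheory.volume)
          (fun β' (z : (Fin p → ℝ) × ℝ) => f (z.2 - ∑ i, z.1 i * β' i)) β
          (fun (z : (Fin p → ℝ) × ℝ) i => (- g (z.2 - ∑ j, z.1 j * β j)) * z.1 i) h ≤ 
          ‖h‖ ^ 2 * ∫ x, (p * ∑ i, x i ^ 2) * ω (∑ i, x i * h i) ∂K := fun h => by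
      rw [← integral_const_mul]
      unfold sqErr
      refine prod_bound K _ _ (fun _ => sq_nonneg _) 
        (fun x => mul_nonneg (sq_nonneg _) (mul_nonneg (hN0 x) (hω0 _))) ((I1 h).const_mul _) fun x => ?_
      set t := ∑ i, x i * h i with ht
      have e : ∀ y, (√(f (y - ∑ i, x i * (β + h) i)) - √(f (y - ∑ i, x i * β i)) * 
          (1 + 1 / 2 * ∑ i, (- g (y - ∑ j, x j * β j)) * x i * h i)) ^ 2 = 
          (fun y => (s (y - t) - s y + t * r y) ^ 2) (y - ∑ i, x i * β i) := fun y => by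
        have : ∑ i, (- g (y - ∑ j, x j * β j)) * x i * h i = - g (y - ∑ j, x j * β j) * t := by
          rw [ht, Finset.mul_sum]; simp only [mul_assoc]
        rw [this, hdot]
        simp only [hsdef, hrdef, ht, sub_sub]
        ring
      simp only [e]
      rw [integral_sub_right_eq_self (fun y => (s (y - t) - s y + t * r y) ^ 2)]
      calc _ ≤ t ^ 2 * ω t := hΨ t
        _ ≤ ((p * ∑ i, x i ^ 2) * ‖h‖ ^ 2) * ω t := mul_le_mul_of_nonneg_right (dot_sq x h) (hω0 _)
        _ = _ := by ring
    rw [Asymptotics.isLittleO_iff]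
    intro ε hε
    filter_upwards [T1.eventually (gt_mem_nhds hε)] with h hh
    have hnn : 0 ≤ sqErr (K.prod MeasureTheory.volume)
          (fun β' (z : (Fin p → ℝ) × ℝ) => f (z.2 - ∑ i, z.1 i * β' i)) β
          (fun (z : (Fin p → ℝ) × ℝ) i => (- g (z.2 - ∑ j, z.1 j * β j)) * z.1 i) h := by
      unfold sqErr
      exact integral_nonneg fun _ => sq_nonneg _
    rw [Real.norm_eq_abs, abs_of_nonneg hnn, Real.norm_eq_abs, 
      abs_of_nonneg (sq_nonneg _)]
    refine (key h).trans ?_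
    rw [mul_comm]
    exact mul_le_mul_of_nonneg_right hh.le (sq_nonneg _)
  · have T3 := T2.const_mul 4
    rw [mul_zero] at T3
    refine squeeze_zero (fun h => Real.iSup_nonneg fun t => integral_nonneg fun _ => sq_nonneg _) 
      (fun h => Real.iSup_le (fun t => ?_) (mul_nonneg (by norm_num) (integral_nonneg fun x => 
        mul_nonneg (hN0 x) (hD0 _)))) T3
    rw [← integral_const_mul]
    refine prod_bound K _ _ (fun _ => sq_nonneg _) 
        (fun x => mul_nonneg (by norm_num) (mul_nonneg (hN0 x) (hD0 _))) ((I2 h).const_mul _) fun x => ?_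
    set τ := ∑ i, x i * h i with hτ
    have e : ∀ y, (√(f (y - ∑ i, x i * (β + h) i)) * (∑ i, (- g (y - ∑ j, x j * (β + h) j)) * x i * t.1 i)
        - √(f (y - ∑ i, x i * β i)) * ∑ i, (- g (y - ∑ j, x j * β j)) * x i * t.1 i) ^ 2 = 
        (fun y => 4 * (∑ i, x i * t.1 i) ^ 2 * (r (y - τ) - r y) ^ 2) (y - ∑ i, x i * β i) := fun y => by
      have : ∀ c : ℝ, ∑ i, c * x i * t.1 i = c * ∑ i, x i * t.1 i := fun c => by
        rw [Finset.mul_sum]; simp only [mul_assoc]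
      rw [this, this, hdot]
      simp only [hrdef, hτ, sub_sub]
      ring
    simp only [e]
    rw [integral_sub_right_eq_self (fun y => 4 * (∑ i, x i * t.1 i) ^ 2 * (r (y - τ) - r y) ^ 2), 
      integral_const_mul]
    change _ * D τ ≤ _
    have h1 := dot_sq x t.1
    have h2 : (p * ∑ i, x i ^ 2) * ‖t.1‖ ^ 2 ≤ (p * ∑ i, x i ^ 2) * 1 := 
      mul_le_mul_of_nonneg_left (pow_le_one₀ (norm_nonneg _) t.2) (hN0 x)
    have h3 := mul_le_mul_of_nonneg_right (h1.trans h2) (hD0 τ)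
    linarith

/-- **`L₂` differentiability of linear regression with stochastic regressors.**
If the error distribution `F` on `ℝ` has finite Fisher information of location
(in the sense of Huber's variational characterization over compactly supported
`C¹` functions), and the regressor distribution `K` on `ℝ^p` has a finite second
moment `∫ |x|² K(dx) < ∞`, then `F` possesses a Lebesgue density `f`, and the
linear regression model `P_β(dx,dy) = F(dy - xᵀβ) K(dx)`, with densities
`(x,y) ↦ f(y - xᵀβ)` w.r.t. `K ⊗ λ` and scores `(x,y) ↦ Λ_f(y - xᵀβ) x`, is
continuously `L₂` differentiable at every `β ∈ ℝ^p`. -/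
theorem linear_regression_continuously_L2_differentiable
    {p : ℕ}
    (F : Measure ℝ) [IsProbabilityMeasure F]
    -- finite Fisher information of location
    (hFisher : ∃ C : ℝ, ∀ φ : ℝ → ℝ, ContDiff ℝ 1 φ → HasCompactSupport φ →
        (∫ y, deriv φ y ∂F) ^ 2 ≤ C * ∫ y, φ y ^ 2 ∂F)
    (K : Measure (Fin p → ℝ)) [IsProbabilityMeasure K]
    -- finite second moment of the regressors
    (hK : Integrable (fun x : Fin p → ℝ => ∑ i, x i ^ 2) K) :
    ∃ f : ℝ → ℝ, Measurable f ∧ (∀ y, 0 ≤ f y) ∧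
      F = MeasureTheory.volume.withDensity (fun y => ENNReal.ofReal (f y)) ∧
      ∃ Λf : ℝ → ℝ, ∀ β : Fin p → ℝ,
        IsContL2Diff (K.prod MeasureTheory.volume)
          (fun β' (z : (Fin p → ℝ) × ℝ) => f (z.2 - ∑ i, z.1 i * β' i))
          (fun β' (z : (Fin p → ℝ) × ℝ) i => Λf (z.2 - ∑ j, z.1 j * β' j) * z.1 i)
          β := by
  obtain ⟨g, hg, hg2, hφ⟩ := exists_score F hFisher
  obtain ⟨f, hf, hf0, hF, gi, hfb⟩ := exists_density F g hg (hg2.integrable one_le_two) hφ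
  have hfm := hf.measurable
  have hr : MemLp (fun y => g y * √(f y)) 2 := by
    rw [memLp_two_iff_integrable_sq (Measurable.aestronglyMeasurable (by fun_prop))]
    have := hg2.integrable_sq
    rw [hF, integrable_withDensity_iff_integrable_smul' (by fun_prop)
      (Eventually.of_forall fun _ => ENNReal.ofReal_lt_top)] at this
    refine this.congr (Eventually.of_forall fun y => ?_)
    simp only [ENNReal.toReal_ofReal (hf0 _), smul_eq_mul, mul_pow, Real.sq_sqrt (hf0 _)]
    ring
  exact ⟨f, hfm, hf0, hF, fun y => - g y, fun β => main_aux_s8 K hK f g hg hf hf0 (hr.const_mul _)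
    (sqrt_primitive f g hf hf0 hg gi hfb hr) β⟩
end
end

section
/- Binomial GLM with logit link: Fix m ∈ ℕ and let Q = {Binom(m, p) : p ∈ (0,1)} with counting densities q_p(y) = C(m, y) p^y (1 − p)^{m−y} on y ∈ {0, …, m}, which has Fisher information I^Q_p = m/(p(1 − p)), and let ℓ(θ) = e^θ/(1 + e^θ) be the logit link. Let K be a probability measure on ℝ^p with ∫ |x|² K(dx) < ∞. Then the Binomial GLM P = {P_β(dx, dy) = Binom(m, ℓ(xᵀβ))(dy) K(dx) : β ∈ ℝ^p} is continuously L₂ differentiable at every β ∈ ℝ^p. -/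
open MeasureTheory Filter Topology

noncomputable section

/-- Counting density of the binomial distribution `Binom(m, p)`. -/
def binomPdf (m : ℕ) (p : ℝ) (y : ℕ) : ℝ :=
  if y ≤ m then (m.choose y : ℝ) * p ^ y * (1 - p) ^ (m - y) else 0

/-- The logit link `θ ↦ e^θ / (1 + e^θ)`. -/
def logitLink (θ : ℝ) : ℝ := Real.exp θ / (1 + Real.exp θ)

theorem bg_logit_pos (θ : ℝ) : 0 ≤ logitLink θ := by
  unfold logitLink; positivity

theorem bg_logit_le (θ : ℝ) : logitLink θ ≤ 1 := by
  unfold logitLink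
  rw [div_le_one (by positivity)]
  linarith

theorem bg_pdf_nonneg (m : ℕ) (θ : ℝ) (y : ℕ) : 0 ≤ binomPdf m (logitLink θ) y := by
  unfold binomPdf
  have h1 := bg_logit_pos θ
  have h2 : 0 ≤ 1 - logitLink θ := by linarith [bg_logit_le θ]
  split_ifs
  · positivity
  · exact le_rfl

theorem bg_pdf_le (m : ℕ) (θ : ℝ) (y : ℕ) : binomPdf m (logitLink θ) y ≤ 1 := by
  unfold binomPdf
  have h1 := bg_logit_pos θ
  have h2 : 0 ≤ 1 - logitLink θ := by linarith [bg_logit_le θ]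
  split_ifs with hy
  · have h := add_pow (logitLink θ) (1 - logitLink θ) m
    rw [add_sub_cancel, one_pow] at h
    have h3 := Finset.single_le_sum (s := Finset.range (m+1))
      (f := fun k => logitLink θ ^ k * (1 - logitLink θ) ^ (m - k) * (m.choose k : ℝ))
      (fun i _ => by positivity) (Finset.mem_range.2 (Nat.lt_succ_of_le hy))
    rw [← h] at h3
    calc _ = _ := by ring
      _ ≤ 1 := h3
  · exact zero_le_one

def bgg (m : ℕ) (y : ℕ) (θ : ℝ) : ℝ := Real.sqrt (binomPdf m (logitLink θ) y)

def bgG (m : ℕ) (y : ℕ) (θ : ℝ) : ℝ := bgg m y θ * ((y : ℝ) - m * logitLink θ)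

def bgc (m : ℕ) (y : ℕ) : ℝ := if y ≤ m then 1 else 0

theorem bgg_eq (m y : ℕ) (hy : y ≤ m) (θ : ℝ) :
    bgg m y θ = Real.sqrt (m.choose y) *
      Real.exp ((y : ℝ) / 2 * θ - (m : ℝ) / 2 * Real.log (1 + Real.exp θ)) := by
  unfold bgg binomPdf logitLink
  rw [if_pos hy]
  have hp : (0:ℝ) < 1 + Real.exp θ := by positivity
  have h1 : (1 : ℝ) - Real.exp θ / (1 + Real.exp θ) = 1 / (1 + Real.exp θ) := by
    field_simp; ring
  have h2 : (m.choose y : ℝ) * (Real.exp θ / (1 + Real.exp θ)) ^ y *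
      (1 / (1 + Real.exp θ)) ^ (m - y) = (m.choose y : ℝ) *
      (Real.exp ((y : ℝ) / 2 * θ - (m : ℝ) / 2 * Real.log (1 + Real.exp θ))) ^ 2 := by
    rw [← Real.exp_nat_mul, mul_assoc]
    congr 1
    have : ((2:ℕ):ℝ) * ((y : ℝ) / 2 * θ - (m : ℝ) / 2 * Real.log (1 + Real.exp θ))
      = y * θ - m * Real.log (1 + Real.exp θ) := by push_cast; ring
    rw [this, Real.exp_sub, Real.exp_nat_mul, Real.exp_nat_mul, Real.exp_log hp, div_pow, div_pow,
      one_pow, div_mul_div_comm, ← pow_add, Nat.add_sub_cancel' hy, mul_one]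
  rw [h1, h2, Real.sqrt_mul (by positivity), Real.sqrt_sq (by positivity)]

theorem bgg_zero (m y : ℕ) (hy : ¬ y ≤ m) (θ : ℝ) : bgg m y θ = 0 := by
  unfold bgg binomPdf
  rw [if_neg hy, Real.sqrt_zero]

theorem bgg_deriv (m y : ℕ) (θ : ℝ) : HasDerivAt (bgg m y) (1 / 2 * bgG m y θ) θ := by
  by_cases hy : y ≤ m
  · have hp : (1 + Real.exp θ) ≠ 0 := by positivity
    have h : bgg m y = fun θ => Real.sqrt (m.choose y) *
      Real.exp ((y : ℝ) / 2 * θ - (m : ℝ) / 2 * Real.log (1 + Real.exp θ)) :=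
      funext (bgg_eq m y hy)
    unfold bgG
    rw [h]
    have := (((((hasDerivAt_id θ).const_mul ((y:ℝ)/2)).sub
      ((((Real.hasDerivAt_exp θ).const_add 1).log hp).const_mul ((m:ℝ)/2))).exp).const_mul
        (Real.sqrt (m.choose y)))
    refine this.congr_deriv ?_
    simp only [logitLink, id, Pi.sub_apply]
    ring
  · have h : bgg m y = fun θ => 0 := funext (bgg_zero m y hy)
    unfold bgG
    rw [h]
    simpa using hasDerivAt_const θ (0:ℝ)

theorem bgG_cont (m y : ℕ) : Continuous (bgG m y) := by
  have h1 : Continuous (bgg m y) :=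
    continuous_iff_continuousAt.2 fun θ => (bgg_deriv m y θ).continuousAt
  have h2 : Continuous logitLink := by
    unfold logitLink
    exact Real.continuous_exp.div (by fun_prop) (fun x => by positivity)
  unfold bgG
  fun_prop

theorem bgG_bound (m y : ℕ) (θ : ℝ) : |bgG m y θ| ≤ m * bgc m y := by
  unfold bgG bgc
  split_ifs with hy
  · rw [abs_mul, mul_one]
    have h0 : 0 ≤ bgg m y θ := Real.sqrt_nonneg _
    have h1 : bgg m y θ ≤ 1 := Real.sqrt_le_one.2 (bg_pdf_le m θ y)
    have h2 : |(y:ℝ) - m * logitLink θ| ≤ m := by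
      have a := bg_logit_pos θ
      have b := bg_logit_le θ
      have c : (y:ℝ) ≤ m := by exact_mod_cast hy
      have d : (0:ℝ) ≤ y := by positivity
      have e : (0:ℝ) ≤ m := by positivity
      rw [abs_le]; constructor <;> nlinarith
    rw [abs_of_nonneg h0]
    nlinarith [abs_nonneg ((y:ℝ) - m * logitLink θ)]
  · simp [bgg_zero m y hy]

theorem bgg_lip (m y : ℕ) (a b : ℝ) : |bgg m y b - bgg m y a| ≤ m * bgc m y * |b - a| := by
  have hc : 0 ≤ (m:ℝ) * bgc m y := (abs_nonneg _).trans (bgG_bound m y 0)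
  have := Convex.norm_image_sub_le_of_norm_hasDerivWithin_le (f := bgg m y) (s := Set.univ)
    (f' := fun θ => 1 / 2 * bgG m y θ) (C := m * bgc m y) (x := a) (y := b)
    (fun x _ => (bgg_deriv m y x).hasDerivWithinAt)
    (fun x _ => by
      rw [Real.norm_eq_abs, abs_mul, abs_of_pos (by norm_num : (0:ℝ) < 1/2)]
      linarith [bgG_bound m y x]) convex_univ (Set.mem_univ _) (Set.mem_univ _)
  simpa using this

theorem bgg_cont (m y : ℕ) : Continuous (bgg m y) :=
  continuous_iff_continuousAt.2 fun θ => (bgg_deriv m y θ).continuousAt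

theorem bg_meas {p : ℕ} (F : ℕ → ℝ → ℝ) (hF : ∀ y, Continuous (F y)) (β : Fin p → ℝ) :
    Measurable (fun z : (Fin p → ℝ) × ℕ => F z.2 (∑ i, z.1 i * β i)) := by
  apply measurable_from_prod_countable_left
  intro y
  exact (hF y).measurable.comp (by fun_prop)

theorem bgc_int {p : ℕ} (m : ℕ) (K : Measure (Fin p → ℝ)) [IsProbabilityMeasure K]
    (hK : Integrable (fun x : Fin p → ℝ => ∑ i, x i ^ 2) K) :
    Integrable (fun z : (Fin p → ℝ) × ℕ => (∑ i, z.1 i ^ 2) * bgc m z.2)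
      (K.prod (Measure.count : Measure ℕ)) := by
  refine Integrable.mul_prod (f := fun x : Fin p → ℝ => ∑ i, x i ^ 2) hK ?_
  rw [integrable_count_iff]
  refine summable_of_hasFiniteSupport ((Set.finite_Iic m).subset ?_)
  intro y hy
  by_contra h
  exact hy (by simp only [bgc]; rw [if_neg (show ¬ y ≤ m from h), norm_zero])

theorem bg_dot {p : ℕ} (x h : Fin p → ℝ) : |∑ i, x i * h i| ≤ (∑ i, |x i|) * ‖h‖ := by
  refine (Finset.abs_sum_le_sum_abs _ _).trans ?_
  rw [Finset.sum_mul]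
  refine Finset.sum_le_sum fun i _ => ?_
  rw [abs_mul]
  exact mul_le_mul_of_nonneg_left (norm_le_pi_norm h i) (abs_nonneg _)

theorem bg_S {p : ℕ} (x : Fin p → ℝ) : (∑ i, |x i|) ^ 2 ≤ p * ∑ i, x i ^ 2 := by
  simpa using sq_sum_le_card_mul_sum_sq (s := Finset.univ) (f := fun i => |x i|)

theorem bgc_sq (m y : ℕ) : bgc m y ^ 2 = bgc m y := by
  unfold bgc; split_ifs <;> norm_num

theorem bg_add {p : ℕ} (x β h : Fin p → ℝ) :
    ∑ i, x i * (β + h) i = ∑ i, x i * β i + ∑ i, x i * h i := by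
  simp [mul_add, Finset.sum_add_distrib]

theorem bg_score {p : ℕ} (c : ℝ) (x h : Fin p → ℝ) :
    ∑ i, c * x i * h i = c * ∑ i, x i * h i := by
  rw [Finset.mul_sum]; exact Finset.sum_congr rfl fun i _ => by ring

theorem bg_rem_bound (m y : ℕ) (θ s : ℝ) :
    |bgg m y (θ + s) - bgg m y θ - 1 / 2 * bgG m y θ * s| ≤ 2 * m * bgc m y * |s| := by
  have h1 := bgg_lip m y θ (θ + s)
  rw [add_sub_cancel_left] at h1
  have h2 : |1 / 2 * bgG m y θ * s| ≤ m * bgc m y * |s| := by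
    rw [abs_mul]
    refine mul_le_mul_of_nonneg_right ?_ (abs_nonneg _)
    rw [abs_mul, abs_of_pos (by norm_num : (0:ℝ) < 1/2)]
    linarith [bgG_bound m y θ, abs_nonneg (bgG m y θ)]
  linarith [abs_sub (bgg m y (θ + s) - bgg m y θ) (1 / 2 * bgG m y θ * s)]

theorem bg_dotlim {p : ℕ} (x : Fin p → ℝ) :
    Tendsto (fun h : Fin p → ℝ => ∑ i, x i * h i) (𝓝 0) (𝓝 0) := by
  have : Continuous (fun h : Fin p → ℝ => ∑ i, x i * h i) := by fun_prop
  simpa using this.tendsto 0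

theorem bg_part1 {p : ℕ} (m : ℕ)
    (K : Measure (Fin p → ℝ)) [IsProbabilityMeasure K]
    (hK : Integrable (fun x : Fin p → ℝ => ∑ i, x i ^ 2) K)
    (β : Fin p → ℝ) :
    Tendsto (fun h : Fin p → ℝ => ∫ z : (Fin p → ℝ) × ℕ,
      (bgg m z.2 (∑ i, z.1 i * (β + h) i) - bgg m z.2 (∑ i, z.1 i * β i)
        - 1 / 2 * bgG m z.2 (∑ i, z.1 i * β i) * ∑ i, z.1 i * h i) ^ 2 / ‖h‖ ^ 2
        ∂(K.prod (Measure.count : Measure ℕ))) (𝓝 0) (𝓝 0) := by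
  have key := tendsto_integral_filter_of_dominated_convergence
    (μ := K.prod (Measure.count : Measure ℕ)) (l := 𝓝 (0 : Fin p → ℝ))
    (F := fun h (z : (Fin p → ℝ) × ℕ) =>
      (bgg m z.2 (∑ i, z.1 i * (β + h) i) - bgg m z.2 (∑ i, z.1 i * β i)
        - 1 / 2 * bgG m z.2 (∑ i, z.1 i * β i) * ∑ i, z.1 i * h i) ^ 2 / ‖h‖ ^ 2)
    (f := fun _ => 0)
    (fun z => (2 * m) ^ 2 * p * ((∑ i, z.1 i ^ 2) * bgc m z.2)) ?_ ?_ ?_ ?_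
  · simpa using key
  · refine Eventually.of_forall fun h => Measurable.aestronglyMeasurable ?_
    have a1 := bg_meas (bgg m) (bgg_cont m) (β + h)
    have a2 := bg_meas (bgg m) (bgg_cont m) β
    have a3 := bg_meas (bgG m) (bgG_cont m) β
    have a4 := bg_meas (fun _ t => t) (fun _ => continuous_id) h
    exact (((a1.sub a2).sub ((a3.const_mul _).mul a4)).pow_const 2).div_const _
  · refine Eventually.of_forall fun h => Eventually.of_forall fun z => ?_
    have hc : 0 ≤ bgc m z.2 := by unfold bgc; split_ifs <;> norm_num
    have hq : 0 ≤ (2 * m : ℝ) ^ 2 * p * ((∑ i, z.1 i ^ 2) * bgc m z.2) := by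
      have : 0 ≤ ∑ i, z.1 i ^ 2 := Finset.sum_nonneg fun i _ => sq_nonneg _
      positivity
    rw [Real.norm_of_nonneg (by positivity)]
    refine div_le_of_le_mul₀ (by positivity) hq ?_
    rw [bg_add]
    have h1 := bg_rem_bound m z.2 (∑ i, z.1 i * β i) (∑ i, z.1 i * h i)
    have h2 := bg_dot z.1 h
    have h3 := h1.trans (mul_le_mul_of_nonneg_left h2
      (by positivity : 0 ≤ 2 * (m:ℝ) * bgc m z.2))
    rw [← sq_abs]
    refine (pow_le_pow_left₀ (abs_nonneg _) h3 2).trans ?_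
    calc (2 * (m:ℝ) * bgc m z.2 * ((∑ i, |z.1 i|) * ‖h‖)) ^ 2
        = (2 * m) ^ 2 * bgc m z.2 ^ 2 * ‖h‖ ^ 2 * (∑ i, |z.1 i|) ^ 2 := by ring
      _ ≤ (2 * m) ^ 2 * bgc m z.2 ^ 2 * ‖h‖ ^ 2 * (p * ∑ i, z.1 i ^ 2) :=
          mul_le_mul_of_nonneg_left (bg_S z.1) (by positivity)
      _ = _ := by rw [bgc_sq]; ring
  · exact (bgc_int m K hK).const_mul _
  · refine Eventually.of_forall fun z => ?_
    have h1 := (bgg_deriv m z.2 (∑ i, z.1 i * β i))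
    rw [hasDerivAt_iff_isLittleO_nhds_zero] at h1
    have h2 := h1.comp_tendsto (bg_dotlim z.1)
    have h3 : (fun h : Fin p → ℝ => ∑ i, z.1 i * h i) =O[𝓝 0] fun h => ‖h‖ :=
      Asymptotics.IsBigO.of_bound (∑ i, |z.1 i|) (Eventually.of_forall fun h => by
        simpa using bg_dot z.1 h)
    have h4 := ((h2.trans_isBigO h3).pow (n := 2) two_pos).tendsto_div_nhds_zero
    refine h4.congr fun h => ?_
    simp only [Function.comp, bg_add, smul_eq_mul]
    ring

theorem bg_part2 {p : ℕ} (m : ℕ)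
    (K : Measure (Fin p → ℝ)) [IsProbabilityMeasure K]
    (hK : Integrable (fun x : Fin p → ℝ => ∑ i, x i ^ 2) K)
    (β : Fin p → ℝ) :
    (∀ h : Fin p → ℝ, Integrable (fun z : (Fin p → ℝ) × ℕ =>
      (bgG m z.2 (∑ i, z.1 i * (β + h) i) - bgG m z.2 (∑ i, z.1 i * β i)) ^ 2
        * (∑ i, |z.1 i|) ^ 2) (K.prod (Measure.count : Measure ℕ))) ∧
    Tendsto (fun h : Fin p → ℝ => ∫ z : (Fin p → ℝ) × ℕ,
      (bgG m z.2 (∑ i, z.1 i * (β + h) i) - bgG m z.2 (∑ i, z.1 i * β i)) ^ 2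
        * (∑ i, |z.1 i|) ^ 2
        ∂(K.prod (Measure.count : Measure ℕ))) (𝓝 0) (𝓝 0) := by
  have hm : ∀ h : Fin p → ℝ, AEStronglyMeasurable (fun z : (Fin p → ℝ) × ℕ =>
      (bgG m z.2 (∑ i, z.1 i * (β + h) i) - bgG m z.2 (∑ i, z.1 i * β i)) ^ 2
        * (∑ i, |z.1 i|) ^ 2) (K.prod (Measure.count : Measure ℕ)) := fun h => by
    refine Measurable.aestronglyMeasurable ?_
    have a1 := bg_meas (bgG m) (bgG_cont m) (β + h)
    have a2 := bg_meas (bgG m) (bgG_cont m) β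
    have a3 : Continuous (fun x : Fin p → ℝ => (∑ i, |x i|) ^ 2) := by fun_prop
    exact ((a1.sub a2).pow_const 2).mul (a3.measurable.comp measurable_fst)
  have hb : ∀ (h : Fin p → ℝ) (z : (Fin p → ℝ) × ℕ),
      ‖(bgG m z.2 (∑ i, z.1 i * (β + h) i) - bgG m z.2 (∑ i, z.1 i * β i)) ^ 2
        * (∑ i, |z.1 i|) ^ 2‖ ≤ (2 * m) ^ 2 * p * ((∑ i, z.1 i ^ 2) * bgc m z.2) := by
    intro h z
    rw [Real.norm_of_nonneg (by positivity), ← sq_abs (_ - _)]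
    have h1 := bgG_bound m z.2 (∑ i, z.1 i * (β + h) i)
    have h2 := bgG_bound m z.2 (∑ i, z.1 i * β i)
    have h3 : |bgG m z.2 (∑ i, z.1 i * (β + h) i) - bgG m z.2 (∑ i, z.1 i * β i)|
        ≤ 2 * m * bgc m z.2 := (abs_sub _ _).trans (by linarith)
    calc _ ≤ (2 * m * bgc m z.2) ^ 2 * (p * ∑ i, z.1 i ^ 2) :=
          mul_le_mul (pow_le_pow_left₀ (abs_nonneg _) h3 2) (bg_S z.1) (by positivity)
            (by positivity)
      _ = (2 * m) ^ 2 * bgc m z.2 ^ 2 * (p * ∑ i, z.1 i ^ 2) := by ring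
      _ = _ := by rw [bgc_sq]; ring
  have hi := (bgc_int m K hK).const_mul ((2 * m) ^ 2 * p)
  refine ⟨fun h => hi.mono' (hm h) (Eventually.of_forall (hb h)), ?_⟩
  have key := tendsto_integral_filter_of_dominated_convergence
    (μ := K.prod (Measure.count : Measure ℕ)) (l := 𝓝 (0 : Fin p → ℝ))
    (f := fun _ => (0:ℝ)) _
    (Eventually.of_forall hm) (Eventually.of_forall fun h => Eventually.of_forall (hb h)) hi
    (Eventually.of_forall fun z => ?_)
  · simpa using key
  · have hc := bgG_cont m z.2
    have : Continuous fun h : Fin p → ℝ =>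
      (bgG m z.2 (∑ i, z.1 i * (β + h) i) - bgG m z.2 (∑ i, z.1 i * β i)) ^ 2
        * (∑ i, |z.1 i|) ^ 2 := by fun_prop
    simpa using this.tendsto 0

/-- **Binomial GLM with logit link.** For the binomial error model `Binom(m, p)`
(which has Fisher information `m/(p(1-p))`) with logit link `ℓ(θ) = e^θ/(1+e^θ)`,
if `∫ |x|² K(dx) < ∞`, then the binomial GLM
`P_β(dx,dy) = Binom(m, ℓ(xᵀβ))(dy) K(dx)`, with densities relative to
`K ⊗ counting` and scores `(x,y) ↦ (y - m ℓ(xᵀβ)) x`, is continuously `L₂`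
differentiable at every `β ∈ ℝ^p`. -/
theorem binomial_glm_logit_continuously_L2_differentiable
    {p : ℕ} (m : ℕ)
    (K : Measure (Fin p → ℝ)) [IsProbabilityMeasure K]
    (hK : Integrable (fun x : Fin p → ℝ => ∑ i, x i ^ 2) K)
    (β : Fin p → ℝ) :
    IsContL2Diff (K.prod (Measure.count : Measure ℕ))
      (fun β' (z : (Fin p → ℝ) × ℕ) => binomPdf m (logitLink (∑ i, z.1 i * β' i)) z.2)
      (fun β' (z : (Fin p → ℝ) × ℕ) i =>
        ((z.2 : ℝ) - m * logitLink (∑ j, z.1 j * β' j)) * z.1 i)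
      β := by
  refine ⟨⟨?_, ?_⟩, ?_⟩
  · have hi := (bgc_int m K hK).const_mul ((m:ℝ) ^ 2)
    have he : (fun z : (Fin p → ℝ) × ℕ =>
        (∑ i, (((z.2 : ℝ) - m * logitLink (∑ j, z.1 j * β j)) * z.1 i) ^ 2) *
          binomPdf m (logitLink (∑ i, z.1 i * β i)) z.2) =
        fun z => bgG m z.2 (∑ i, z.1 i * β i) ^ 2 * ∑ i, z.1 i ^ 2 := by
      funext z
      simp only [bgG, bgg, mul_pow, Real.sq_sqrt (bg_pdf_nonneg _ _ _), ← Finset.mul_sum]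
      ring
    show Integrable (fun z : (Fin p → ℝ) × ℕ =>
        (∑ i, (((z.2 : ℝ) - m * logitLink (∑ j, z.1 j * β j)) * z.1 i) ^ 2) *
          binomPdf m (logitLink (∑ i, z.1 i * β i)) z.2) _
    rw [he]
    refine hi.mono' (Measurable.aestronglyMeasurable ?_) (Eventually.of_forall fun z => ?_)
    · have a3 : Continuous (fun x : Fin p → ℝ => ∑ i, x i ^ 2) := by fun_prop
      exact ((bg_meas (bgG m) (bgG_cont m) β).pow_const 2).mul (a3.measurable.comp measurable_fst)
    · have h0 : 0 ≤ ∑ i, z.1 i ^ 2 := Finset.sum_nonneg fun i _ => sq_nonneg _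
      rw [Real.norm_of_nonneg (by positivity), ← sq_abs]
      calc _ ≤ (m * bgc m z.2) ^ 2 * ∑ i, z.1 i ^ 2 :=
            mul_le_mul_of_nonneg_right (pow_le_pow_left₀ (abs_nonneg _) (bgG_bound _ _ _) 2) h0
        _ = m ^ 2 * bgc m z.2 ^ 2 * ∑ i, z.1 i ^ 2 := by ring
        _ = _ := by rw [bgc_sq]; ring
  · have he : ∀ h : Fin p → ℝ, sqErr (K.prod (Measure.count : Measure ℕ))
        (fun β' (z : (Fin p → ℝ) × ℕ) => binomPdf m (logitLink (∑ i, z.1 i * β' i)) z.2) β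
        (fun (z : (Fin p → ℝ) × ℕ) i =>
          ((z.2 : ℝ) - m * logitLink (∑ j, z.1 j * β j)) * z.1 i) h =
        ∫ z : (Fin p → ℝ) × ℕ,
      (bgg m z.2 (∑ i, z.1 i * (β + h) i) - bgg m z.2 (∑ i, z.1 i * β i)
        - 1 / 2 * bgG m z.2 (∑ i, z.1 i * β i) * ∑ i, z.1 i * h i) ^ 2
        ∂(K.prod (Measure.count : Measure ℕ)) := by
      intro h
      unfold sqErr
      refine integral_congr_ae (Eventually.of_forall fun z => ?_)
      simp only [bg_score, bgG, bgg]
      ring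
    refine (Asymptotics.isLittleO_iff_tendsto ?_).2 ?_
    · intro h hh
      have h0 : h = 0 := by simpa using hh
      subst h0
      rw [he]
      simp
    · refine (bg_part1 m K hK β).congr fun h => ?_
      rw [he, integral_div]
  · obtain ⟨hi, ht⟩ := bg_part2 m K hK β
    refine squeeze_zero (fun h => Real.iSup_nonneg fun t => integral_nonneg fun z => sq_nonneg _)
      (fun h => ?_) ht
    haveI : Nonempty {t : Fin p → ℝ // ‖t‖ ≤ 1} := ⟨⟨0, by simp⟩⟩
    refine ciSup_le fun t => ?_
    refine integral_mono_of_nonneg (Eventually.of_forall fun z => sq_nonneg _) (hi h)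
      (Eventually.of_forall fun z => ?_)
    have h1 : (∑ i, z.1 i * t.1 i) ^ 2 ≤ (∑ i, |z.1 i|) ^ 2 := by
      rw [← sq_abs]
      refine pow_le_pow_left₀ (abs_nonneg _) ((bg_dot z.1 t.1).trans ?_) 2
      exact mul_le_of_le_one_right (Finset.sum_nonneg fun i _ => abs_nonneg _) t.2
    calc _ = (bgG m z.2 (∑ i, z.1 i * (β + h) i) - bgG m z.2 (∑ i, z.1 i * β i)) ^ 2
        * (∑ i, z.1 i * t.1 i) ^ 2 := by
          simp only [bg_score, bgG, bgg]
          ring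
      _ ≤ _ := mul_le_mul_of_nonneg_left h1 (sq_nonneg _)
end
end

section
/- Poisson GLM with log link: Let Q = {Pois(λ) : λ ∈ (0, ∞)} with counting densities q_λ(y) = e^{−λ} λ^y / y! on y ∈ ℕ, which has Fisher information I^Q_λ = 1/λ, and let ℓ(θ) = e^θ be the log link. Let β ∈ ℝ^p and let K be a probability measure on ℝ^p such that ∫ e^{|x|(|β| + δ)} |x|² K(dx) < ∞ for some δ > 0. Then the Poisson GLM P = {P_β(dx, dy) = Pois(e^{xᵀβ})(dy) K(dx)} is continuously L₂ differentiable at β. -/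
open MeasureTheory Filter Topology

noncomputable section

/-- Counting density of the Poisson distribution with mean `l`. -/
def poisPdf (l : ℝ) (y : ℕ) : ℝ := Real.exp (-l) * l ^ y / (Nat.factorial y)

lemma hs_conv {f g : ℕ → ℝ} {a b : ℝ} (h : HasSum f a) (hf : ∀ y, g y = f y) (hb : b = a) :
    HasSum g b := by
  have : g = f := funext hf
  rw [this, hb]; exact h

lemma pois_mom (α b γ c : ℝ) :
    HasSum (fun y : ℕ => (α + b * y + γ * (y:ℝ)^2) * (c ^ y / (Nat.factorial y)))
      ((α + b * c + γ * (c + c^2)) * Real.exp c) := by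
  have h0 : HasSum (fun y : ℕ => c ^ y / (Nat.factorial y)) (Real.exp c) := by
    rw [Real.exp_eq_exp_ℝ]
    exact NormedSpace.expSeries_div_hasSum_exp c
  have h1 : HasSum (fun y : ℕ => (y:ℝ) * (c ^ y / (Nat.factorial y))) (c * Real.exp c) := by
    rw [← hasSum_nat_add_iff' 1]
    simp only [Finset.range_one, Finset.sum_singleton, Nat.cast_zero, zero_mul, sub_zero]
    refine hs_conv (h0.mul_left c) ?_ rfl
    intro y
    rw [Nat.factorial_succ]
    have : (Nat.factorial y : ℝ) ≠ 0 := by positivity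
    push_cast
    field_simp
    ring
  have h2 : HasSum (fun y : ℕ => (y:ℝ)^2 * (c ^ y / (Nat.factorial y)))
      ((c + c^2) * Real.exp c) := by
    rw [← hasSum_nat_add_iff' 1]
    simp only [Finset.range_one, Finset.sum_singleton, Nat.cast_zero]
    have := ((h1.add h0).mul_left c)
    refine hs_conv (this) ?_ ?_
    · intro y
      rw [Nat.factorial_succ]
      have : (Nat.factorial y : ℝ) ≠ 0 := by positivity
      push_cast
      field_simp
      ring
    · ring
  refine hs_conv (((h0.mul_left α).add (h1.mul_left b)).add (h2.mul_left γ)) ?_ ?_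
  · intro y; ring
  · ring

lemma poisPdf_nonneg' (u : ℝ) (y : ℕ) : 0 ≤ poisPdf (Real.exp u) y := by
  unfold poisPdf; positivity

lemma sqrt_mul_sqrt_pois (u v : ℝ) (y : ℕ) :
    Real.sqrt (poisPdf (Real.exp u) y) * Real.sqrt (poisPdf (Real.exp v) y) =
      Real.exp (-(Real.exp u + Real.exp v) / 2) *
        (Real.exp ((u + v) / 2) ^ y / (Nat.factorial y)) := by
  rw [← Real.sqrt_mul (poisPdf_nonneg' u y)]
  rw [Real.sqrt_eq_iff_mul_self_eq (mul_nonneg (poisPdf_nonneg' u y) (poisPdf_nonneg' v y))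
    (by positivity)]
  unfold poisPdf
  have e1 : Real.exp (-(Real.exp u + Real.exp v) / 2) * Real.exp (-(Real.exp u + Real.exp v) / 2)
      = Real.exp (-Real.exp u) * Real.exp (-Real.exp v) := by
    rw [← Real.exp_add, ← Real.exp_add]; ring_nf
  have e2 : Real.exp ((u + v) / 2) ^ y * Real.exp ((u + v) / 2) ^ y
      = Real.exp u ^ y * Real.exp v ^ y := by
    rw [← mul_pow, ← mul_pow, ← Real.exp_add, ← Real.exp_add]; ring_nf
  have e3 : ∀ P Q F : ℝ, P * (Q / F) * (P * (Q / F)) = (P * P) * (Q * Q) / (F * F) := by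
    intro P Q F; ring
  rw [e3, e1, e2]; ring

/-- cross-moment sum -/
lemma pois_cross (u v α b γ : ℝ) :
    HasSum (fun y : ℕ => (α + b * y + γ * (y:ℝ)^2) *
        (Real.sqrt (poisPdf (Real.exp u) y) * Real.sqrt (poisPdf (Real.exp v) y)))
      ((α + b * Real.exp ((u+v)/2) + γ * (Real.exp ((u+v)/2) + Real.exp ((u+v)/2)^2)) *
        Real.exp (-(Real.exp (v/2) - Real.exp (u/2))^2 / 2)) := by
  have := (pois_mom α b γ (Real.exp ((u+v)/2))).mul_left
    (Real.exp (-(Real.exp u + Real.exp v) / 2))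
  refine hs_conv (this) ?_ ?_
  · intro y
    rw [sqrt_mul_sqrt_pois]; ring
  · have e1 : Real.exp u = Real.exp (u/2) ^ 2 := by rw [← Real.exp_nat_mul]; ring_nf
    have e2 : Real.exp v = Real.exp (v/2) ^ 2 := by rw [← Real.exp_nat_mul]; ring_nf
    have e3 : Real.exp ((u+v)/2) = Real.exp (u/2) * Real.exp (v/2) := by
      rw [← Real.exp_add]; ring_nf
    have : Real.exp (-(Real.exp (v/2) - Real.exp (u/2))^2 / 2) =
        Real.exp (-(Real.exp u + Real.exp v) / 2) * Real.exp (Real.exp ((u+v)/2)) := by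
      rw [← Real.exp_add, e1, e2, e3]; ring_nf
    rw [this]; ring

def AA (u v : ℝ) : ℝ :=
  2 * (1 - Real.exp (-(Real.exp (v/2) - Real.exp (u/2))^2 / 2)) + Real.exp u * (v - u)^2 / 4
    - (v - u) * (Real.exp ((u+v)/2) - Real.exp u) *
      Real.exp (-(Real.exp (v/2) - Real.exp (u/2))^2 / 2)

def BB (u v : ℝ) : ℝ :=
  Real.exp u + Real.exp v - 2 * Real.exp ((u+v)/2) *
    (1 - (Real.exp (v/2) - Real.exp (u/2))^2) *
      Real.exp (-(Real.exp (v/2) - Real.exp (u/2))^2 / 2)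

lemma pois_self (u α b γ : ℝ) :
    HasSum (fun y : ℕ => (α + b * y + γ * (y:ℝ)^2) *
        (Real.sqrt (poisPdf (Real.exp u) y) * Real.sqrt (poisPdf (Real.exp u) y)))
      (α + b * Real.exp u + γ * (Real.exp u + Real.exp u^2)) := by
  have := pois_cross u u α b γ
  simpa using this

lemma hasSum_AA (u v : ℝ) :
    HasSum (fun y : ℕ => (Real.sqrt (poisPdf (Real.exp v) y) -
      Real.sqrt (poisPdf (Real.exp u) y) * (1 + (1/2) * (((y:ℝ) - Real.exp u) * (v - u))))^2)
      (AA u v) := by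
  have h1 := pois_self v 1 0 0
  have h2 := pois_self u ((1 - Real.exp u * (v-u)/2)^2)
    (2 * (1 - Real.exp u * (v-u)/2) * ((v-u)/2)) (((v-u)/2)^2)
  have h3 := pois_cross u v (-2 * (1 - Real.exp u * (v-u)/2)) (-2 * ((v-u)/2)) 0
  refine hs_conv ((h1.add h2).add h3) ?_ ?_
  · intro y; ring
  · unfold AA; ring

lemma hasSum_BB (u v w : ℝ) :
    HasSum (fun y : ℕ => (Real.sqrt (poisPdf (Real.exp v) y) * (((y:ℝ) - Real.exp v) * w) -
      Real.sqrt (poisPdf (Real.exp u) y) * (((y:ℝ) - Real.exp u) * w))^2)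
      (BB u v * w^2) := by
  have h1 := pois_self v (Real.exp v^2 * w^2) (-2 * Real.exp v * w^2) (w^2)
  have h2 := pois_self u (Real.exp u^2 * w^2) (-2 * Real.exp u * w^2) (w^2)
  have h3 := pois_cross u v (-2 * Real.exp u * Real.exp v * w^2)
    (2 * (Real.exp u + Real.exp v) * w^2) (-2 * w^2)
  refine hs_conv ((h1.add h2).add h3) ?_ ?_
  · intro y; ring
  · have e1 : Real.exp u = Real.exp (u/2) ^ 2 := by rw [← Real.exp_nat_mul]; ring_nf
    have e2 : Real.exp v = Real.exp (v/2) ^ 2 := by rw [← Real.exp_nat_mul]; ring_nf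
    have e3 : Real.exp ((u+v)/2) = Real.exp (u/2) * Real.exp (v/2) := by
      rw [← Real.exp_add]; ring_nf
    unfold BB
    rw [e3, e1, e2]; ring

lemma hasSum_score (u w : ℝ) :
    HasSum (fun y : ℕ => (((y:ℝ) - Real.exp u)^2 * w) * poisPdf (Real.exp u) y)
      (Real.exp u * w) := by
  have h1 := pois_self u (Real.exp u^2 * w) (-2 * Real.exp u * w) w
  refine hs_conv (h1) ?_ ?_
  · intro y; rw [Real.mul_self_sqrt (poisPdf_nonneg' u y)]; ring
  · ring

lemma AA_nonneg (u v : ℝ) : 0 ≤ AA u v := (hasSum_AA u v).nonneg fun _ => sq_nonneg _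

lemma BB_nonneg (u v : ℝ) : 0 ≤ BB u v := by
  have := (hasSum_BB u v 1).nonneg fun _ => sq_nonneg _
  simpa using this

lemma BB_le (u v D : ℝ) (hu : Real.exp u ≤ D) (hv : Real.exp v ≤ D) : BB u v ≤ 4 * D := by
  have h1 := (hasSum_BB u v 1)
  have h2 := (hasSum_score u 2).add (hasSum_score v 2)
  have := hasSum_le (fun y => ?_) h1 h2
  · linarith
  · have a1 := Real.sq_sqrt (poisPdf_nonneg' u y)
    have a2 := Real.sq_sqrt (poisPdf_nonneg' v y)
    conv_rhs => rw [← a1, ← a2]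
    nlinarith [sq_nonneg (Real.sqrt (poisPdf (Real.exp v) y) * (((y:ℝ) - Real.exp v)) +
      Real.sqrt (poisPdf (Real.exp u) y) * (((y:ℝ) - Real.exp u)))]

lemma AA_bounds (u v D : ℝ) (hu : Real.exp u ≤ D) (hv : Real.exp v ≤ D) :
    AA u v ≤ (v-u)^2 * D ∧ (|v - u| ≤ 1 → AA u v ≤ (v-u)^4 * (D + D^2)) := by
  have e1 : Real.exp u = Real.exp (u/2) ^ 2 := by rw [← Real.exp_nat_mul]; ring_nf
  have e2 : Real.exp v = Real.exp (v/2) ^ 2 := by rw [← Real.exp_nat_mul]; ring_nf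
  have e3 : Real.exp ((u+v)/2) = Real.exp (u/2) * Real.exp (v/2) := by
    rw [← Real.exp_add]; ring_nf
  have e4 : Real.exp (v/2) = Real.exp (u/2) * Real.exp ((v-u)/2) := by
    rw [← Real.exp_add]; ring_nf
  have e5 : Real.exp (u/2) = Real.exp (v/2) * Real.exp (-((v-u)/2)) := by
    rw [← Real.exp_add]; ring_nf
  unfold AA
  rw [e3, e1]
  rw [e1] at hu; rw [e2] at hv
  have ha := Real.exp_pos (u/2)
  have hb := Real.exp_pos (v/2)
  obtain ⟨r, hr⟩ : ∃ r, r = (v-u)/2 := ⟨_, rfl⟩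
  rw [← hr] at e4 e5
  have hvu : v - u = 2 * r := by linarith
  rw [hvu]
  generalize Real.exp (u/2) = a at *
  generalize Real.exp (v/2) = b at *
  have hE1 : Real.exp (-(b-a)^2/2) ≤ 1 := by
    rw [Real.exp_le_one_iff]; nlinarith [sq_nonneg (b-a)]
  have hE0 := Real.exp_pos (-(b-a)^2/2)
  have hE2 := Real.add_one_le_exp (-(b-a)^2/2)
  generalize Real.exp (-(b-a)^2/2) = E at *
  have h1 := Real.add_one_le_exp r
  have h2 := Real.add_one_le_exp (-r)
  have l1 : a * r ≤ b - a := by nlinarith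
  have l2 : b - a ≤ b * r := by nlinarith
  have hpos : 0 ≤ r * (b - a) := by
    rcases le_total 0 r with h | h
    · exact mul_nonneg h (le_trans (by positivity) l1)
    · exact mul_nonneg_of_nonpos_of_nonpos h (l2.trans (mul_nonpos_of_nonneg_of_nonpos hb.le h))
  have hD : 0 ≤ D := le_trans (by positivity) hu
  have hba : (b-a)^2 ≤ r^2 * D := by
    rcases le_total 0 r with h | h
    · have : 0 ≤ b - a := le_trans (by positivity) l1
      calc (b-a)^2 ≤ (b*r)^2 := by gcongr
        _ = r^2 * b^2 := by ring
        _ ≤ _ := by gcongr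
    · calc (b-a)^2 = (a-b)^2 := by ring
        _ ≤ (a * (-r))^2 := by
          apply pow_le_pow_left₀ _ (by linarith)
          nlinarith
        _ = r^2 * a^2 := by ring
        _ ≤ _ := by gcongr
  have har : a^2 * r^2 ≤ r^2 * D := by nlinarith [sq_nonneg r]
  have hP : 0 ≤ a * (r * (b-a)) := by positivity
  constructor
  · have : 0 ≤ a * (r * (b-a)) * E := by positivity
    nlinarith [mul_nonneg (sq_nonneg r) hD]
  · intro hs
    have hr1 : |r| ≤ 1 := by
      rw [abs_mul] at hs; norm_num at hs; linarith [abs_nonneg r]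
    have hx := Real.abs_exp_sub_one_sub_id_le hr1
    have t1 : (b - a - a*r)^2 ≤ r^4 * D := by
      have : (b - a - a*r)^2 = a^2 * (Real.exp r - 1 - r)^2 := by rw [e4]; ring
      rw [this, ← sq_abs (Real.exp r - 1 - r)]
      calc a^2 * |Real.exp r - 1 - r|^2 ≤ D * (r^2)^2 := by gcongr
        _ = _ := by ring
    have t2 : a * (r * (b-a)) ≤ r^2 * D := by
      nlinarith [sq_nonneg (a*r - (b-a))]
    have t3 : 2 * (a * (r * (b-a))) * (1 - E) ≤ (r^2*D) * (r^2*D) := by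
      have : 2 * (1 - E) ≤ r^2 * D := by linarith
      calc _ = (a * (r * (b-a))) * (2 * (1 - E)) := by ring
        _ ≤ _ := by
          apply mul_le_mul t2 this (by linarith)
          positivity
    have t4 : 0 ≤ r^4 * D := by positivity
    have t5 : 0 ≤ r^4 * D^2 := by positivity
    nlinarith

lemma lint_prod {X : Type*} [MeasurableSpace X] (K : Measure X) [IsProbabilityMeasure K]
    (f : X × ℕ → ℝ) (F : X → ℝ) (hf : Measurable f) (h0 : ∀ z, 0 ≤ f z)
    (hs : ∀ x, HasSum (fun y => f (x, y)) (F x)) :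
    ∫⁻ z, ENNReal.ofReal (f z) ∂(K.prod (Measure.count : Measure ℕ)) =
      ∫⁻ x, ENNReal.ofReal (F x) ∂K := by
  rw [lintegral_prod _ hf.ennreal_ofReal.aemeasurable]
  refine lintegral_congr fun x => ?_
  rw [lintegral_count, ← (hs x).tsum_eq,
    ENNReal.ofReal_tsum_of_nonneg (fun y => h0 _) (hs x).summable]

lemma int_prod {X : Type*} [MeasurableSpace X] (K : Measure X) [IsProbabilityMeasure K]
    (f : X × ℕ → ℝ) (F : X → ℝ) (hf : Measurable f) (hF : Measurable F) (h0 : ∀ z, 0 ≤ f z)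
    (hs : ∀ x, HasSum (fun y => f (x, y)) (F x)) :
    ∫ z, f z ∂(K.prod (Measure.count : Measure ℕ)) = ∫ x, F x ∂K := by
  rw [integral_eq_lintegral_of_nonneg_ae (.of_forall h0) hf.aestronglyMeasurable,
    integral_eq_lintegral_of_nonneg_ae (.of_forall fun x => (hs x).nonneg fun y => h0 _)
      hF.aestronglyMeasurable, lint_prod K f F hf h0 hs]

lemma integrable_prod_count {X : Type*} [MeasurableSpace X] (K : Measure X)
    [IsProbabilityMeasure K]
    (f : X × ℕ → ℝ) (F : X → ℝ) (hf : Measurable f) (h0 : ∀ z, 0 ≤ f z)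
    (hs : ∀ x, HasSum (fun y => f (x, y)) (F x)) (hI : Integrable F K) :
    Integrable f (K.prod (Measure.count : Measure ℕ)) := by
  refine ⟨hf.aestronglyMeasurable, ?_⟩
  rw [hasFiniteIntegral_iff_ofReal (.of_forall h0), lint_prod K f F hf h0 hs,
    ← hasFiniteIntegral_iff_ofReal (.of_forall fun x => (hs x).nonneg fun y => h0 _)]
  exact hI.2

lemma abs_dot_le {p : ℕ} (x h : Fin p → ℝ) :
    |∑ i, x i * h i| ≤ Real.sqrt (∑ i, x i ^ 2) * Real.sqrt (∑ i, h i ^ 2) := by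
  rw [← Real.sqrt_sq_eq_abs, ← Real.sqrt_mul (Finset.sum_nonneg fun i _ => sq_nonneg _)]
  exact Real.sqrt_le_sqrt (Finset.sum_mul_sq_le_sq_mul_sq _ _ _)

lemma sum_sq_le_norm {p : ℕ} (h : Fin p → ℝ) : ∑ i, h i ^ 2 ≤ p * ‖h‖ ^ 2 := by
  calc ∑ i, h i ^ 2 ≤ ∑ _i : Fin p, ‖h‖ ^ 2 := by
        refine Finset.sum_le_sum fun i _ => ?_
        rw [← sq_abs, ← Real.norm_eq_abs]
        gcongr
        exact norm_le_pi_norm h i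
    _ = _ := by simp

lemma dot_sq_le {p : ℕ} (x h : Fin p → ℝ) :
    (∑ i, x i * h i)^2 ≤ (∑ i, x i ^ 2) * (p * ‖h‖ ^ 2) :=
  (Finset.sum_mul_sq_le_sq_mul_sq _ _ _).trans
    (mul_le_mul_of_nonneg_left (sum_sq_le_norm h) (Finset.sum_nonneg fun i _ => sq_nonneg _))

lemma meas_pois {p : ℕ} (β : Fin p → ℝ) :
    Measurable (fun z : (Fin p → ℝ) × ℕ => poisPdf (Real.exp (∑ i, z.1 i * β i)) z.2) := by
  refine measurable_from_prod_countable_left fun y => ?_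
  unfold poisPdf
  simp only
  fun_prop

theorem poisson_glm_log_continuously_L2_differentiable
    {p : ℕ}
    (K : Measure (Fin p → ℝ)) [IsProbabilityMeasure K]
    (β : Fin p → ℝ)
    (hK : ∃ δ : ℝ, 0 < δ ∧
      Integrable (fun x : Fin p → ℝ =>
        Real.exp (Real.sqrt (∑ i, x i ^ 2) * (Real.sqrt (∑ i, β i ^ 2) + δ)) *
          (∑ i, x i ^ 2)) K) :
    IsContL2Diff (K.prod (Measure.count : Measure ℕ))
      (fun β' (z : (Fin p → ℝ) × ℕ) => poisPdf (Real.exp (∑ i, z.1 i * β' i)) z.2)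
      (fun β' (z : (Fin p → ℝ) × ℕ) i =>
        ((z.2 : ℝ) - Real.exp (∑ j, z.1 j * β' j)) * z.1 i)
      β := by
  obtain ⟨δ, hδ, hI⟩ := hK
  obtain ⟨D, hD⟩ : ∃ D : (Fin p → ℝ) → ℝ, D = fun x =>
    Real.exp (Real.sqrt (∑ i, x i ^ 2) * (Real.sqrt (∑ i, β i ^ 2) + δ)) := ⟨_, rfl⟩
  have hI' : Integrable (fun x => D x * ∑ i, x i ^ 2) K := by rw [hD]; exact hI
  have hD0 : ∀ x, 0 ≤ D x := fun x => by rw [hD]; positivity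
  have hS0 : ∀ x : Fin p → ℝ, 0 ≤ ∑ i, x i ^ 2 := fun x =>
    Finset.sum_nonneg fun i _ => sq_nonneg _
  have hsplit : ∀ x h : Fin p → ℝ, ∑ i, x i * (β + h) i = ∑ i, x i * β i + ∑ i, x i * h i := by
    intro x h
    rw [← Finset.sum_add_distrib]
    exact Finset.sum_congr rfl fun i _ => by simp [mul_add]
  have hfac : ∀ (x t : Fin p → ℝ) (c : ℝ), ∑ i, c * x i * t i = c * ∑ i, x i * t i := by
    intro x t c
    rw [Finset.mul_sum]
    exact Finset.sum_congr rfl fun i _ => by ring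
  have hexp0 : ∀ x : Fin p → ℝ, Real.exp (∑ i, x i * β i) ≤ D x := by
    intro x
    rw [hD]
    refine Real.exp_le_exp.2 ((le_abs_self _).trans ((abs_dot_le x β).trans ?_))
    gcongr
    linarith
  have hev : ∀ᶠ h : Fin p → ℝ in 𝓝 0, ∀ x : Fin p → ℝ,
      Real.exp (∑ i, x i * (β + h) i) ≤ D x := by
    have hc : Tendsto (fun h : Fin p → ℝ => Real.sqrt (∑ i, h i ^ 2)) (𝓝 0) (𝓝 0) := by
      have : Continuous (fun h : Fin p → ℝ => Real.sqrt (∑ i, h i ^ 2)) := by fun_prop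
      simpa using this.tendsto 0
    filter_upwards [hc.eventually_lt_const hδ] with h hh x
    rw [hD, hsplit]
    refine Real.exp_le_exp.2 ?_
    have h1 := (le_abs_self _).trans (abs_dot_le x β)
    have h2 := (le_abs_self _).trans (abs_dot_le x h)
    have h3 := mul_le_mul_of_nonneg_left hh.le (Real.sqrt_nonneg (∑ i, x i ^ 2))
    linarith
  have hmeasP := fun β' : Fin p → ℝ => meas_pois β'
  have hAm : ∀ h : Fin p → ℝ, Measurable fun x : Fin p → ℝ =>
      AA (∑ i, x i * β i) (∑ i, x i * (β + h) i) := by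
    intro h; unfold AA; fun_prop
  have hBm : ∀ h : Fin p → ℝ, Measurable fun x : Fin p → ℝ =>
      BB (∑ i, x i * β i) (∑ i, x i * (β + h) i) := by
    intro h; unfold BB; fun_prop
  have hnat : Measurable fun z : (Fin p → ℝ) × ℕ => (z.2 : ℝ) :=
    measurable_from_nat.comp measurable_snd
  refine ⟨⟨?_, ?_⟩, ?_⟩
  · refine integrable_prod_count K _ (fun x => Real.exp (∑ i, x i * β i) * ∑ i, x i ^ 2)
      ?_ ?_ ?_ ?_
    · have := hmeasP β
      fun_prop
    · intro z
      exact mul_nonneg (Finset.sum_nonneg fun i _ => sq_nonneg _) (poisPdf_nonneg' _ _)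
    · intro x
      refine hs_conv (hasSum_score (∑ i, x i * β i) (∑ i, x i ^ 2)) ?_ rfl
      intro y
      simp only [mul_pow, ← Finset.mul_sum]
    · refine hI'.mono' (by fun_prop) (.of_forall fun x => ?_)
      rw [Real.norm_eq_abs, abs_of_nonneg (mul_nonneg (Real.exp_pos _).le (hS0 x))]
      exact mul_le_mul_of_nonneg_right (hexp0 x) (hS0 x)
  · have key : ∀ h : Fin p → ℝ, sqErr (K.prod (Measure.count : Measure ℕ))
        (fun β' (z : (Fin p → ℝ) × ℕ) => poisPdf (Real.exp (∑ i, z.1 i * β' i)) z.2) β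
        (fun (z : (Fin p → ℝ) × ℕ) i => ((z.2 : ℝ) - Real.exp (∑ j, z.1 j * β j)) * z.1 i) h
        = ∫ x, AA (∑ i, x i * β i) (∑ i, x i * (β + h) i) ∂K := by
      intro h
      unfold sqErr
      refine int_prod K _ _ ?_ (hAm h) (fun z => sq_nonneg _) ?_
      · have h1 := hmeasP β
        have h2 := hmeasP (β + h)
        fun_prop
      · intro x
        refine hs_conv (hasSum_AA (∑ i, x i * β i) (∑ i, x i * (β + h) i)) ?_ rfl
        intro y
        simp only [hfac]
        rw [show ∑ i, x i * (β + h) i - ∑ i, x i * β i = ∑ i, x i * h i by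
          rw [hsplit]; ring]
    simp only [key]
    rw [Asymptotics.isLittleO_iff_tendsto']
    swap
    · refine .of_forall fun h hh => ?_
      have : h = 0 := by simpa using hh
      subst this
      simp [AA]
    have hdiv : ∀ h : Fin p → ℝ, (∫ x, AA (∑ i, x i * β i) (∑ i, x i * (β + h) i) ∂K) / ‖h‖^2
        = ∫ x, AA (∑ i, x i * β i) (∑ i, x i * (β + h) i) / ‖h‖^2 ∂K := fun h =>
      (integral_div _ _).symm
    simp only [hdiv]
    rw [show (0:ℝ) = ∫ _x : Fin p → ℝ, (0:ℝ) ∂K by simp]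
    refine tendsto_integral_filter_of_dominated_convergence
      (fun x => p * (D x * ∑ i, x i ^ 2)) ?_ ?_ (hI'.const_mul _) ?_
    · exact .of_forall fun h => ((hAm h).div_const _).aestronglyMeasurable
    · filter_upwards [hev] with h hh
      refine .of_forall fun x => ?_
      rw [Real.norm_eq_abs, abs_of_nonneg (div_nonneg (AA_nonneg _ _) (by positivity))]
      refine div_le_of_le_mul₀ (by positivity) (by have := hD0 x; have := hS0 x; positivity) ?_
      refine (AA_bounds _ _ (D x) (hexp0 x) (hh x)).1.trans ?_
      rw [hsplit, add_sub_cancel_left]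
      refine (mul_le_mul_of_nonneg_right (dot_sq_le x h) (hD0 x)).trans (le_of_eq (by ring))
    · refine .of_forall fun x => ?_
      have hsm : ∀ᶠ h : Fin p → ℝ in 𝓝 0, |∑ i, x i * h i| < 1 := by
        have : Continuous (fun h : Fin p → ℝ => |∑ i, x i * h i|) := by fun_prop
        have h2 := this.tendsto 0
        simp only [Pi.zero_apply, mul_zero, Finset.sum_const_zero, abs_zero] at h2
        exact h2.eventually_lt_const one_pos
      have hlim : Tendsto (fun h : Fin p → ℝ =>
          ((∑ i, x i ^ 2) * p)^2 * (D x + D x ^ 2) * ‖h‖^2) (𝓝 0) (𝓝 0) := by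
        have : Continuous (fun h : Fin p → ℝ =>
          ((∑ i, x i ^ 2) * p)^2 * (D x + D x ^ 2) * ‖h‖^2) := by fun_prop
        simpa using this.tendsto 0
      refine squeeze_zero' (.of_forall fun h => div_nonneg (AA_nonneg _ _) (by positivity)) ?_ hlim
      filter_upwards [hev, hsm] with h hh hs
      have hd := hD0 x
      refine div_le_of_le_mul₀ (by positivity) (by positivity) ?_
      have := (AA_bounds _ _ (D x) (hexp0 x) (hh x)).2
      rw [hsplit, add_sub_cancel_left] at this
      rw [hsplit]
      refine (this hs.le).trans ?_
      have h4 : (∑ i, x i * h i)^4 ≤ ((∑ i, x i ^ 2) * (p * ‖h‖ ^ 2))^2 := by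
        calc _ = ((∑ i, x i * h i)^2)^2 := by ring
          _ ≤ _ := pow_le_pow_left₀ (sq_nonneg _) (dot_sq_le x h) 2
      refine (mul_le_mul_of_nonneg_right h4 (by positivity)).trans (le_of_eq (by ring))
  · have key : ∀ h t : Fin p → ℝ, ∫ z : (Fin p → ℝ) × ℕ,
        (Real.sqrt (poisPdf (Real.exp (∑ i, z.1 i * (β + h) i)) z.2) *
            (∑ i, ((z.2 : ℝ) - Real.exp (∑ j, z.1 j * (β + h) j)) * z.1 i * t i) -
          Real.sqrt (poisPdf (Real.exp (∑ i, z.1 i * β i)) z.2) *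
            (∑ i, ((z.2 : ℝ) - Real.exp (∑ j, z.1 j * β j)) * z.1 i * t i)) ^ 2
          ∂(K.prod (Measure.count : Measure ℕ))
        = ∫ x, BB (∑ i, x i * β i) (∑ i, x i * (β + h) i) * (∑ i, x i * t i)^2 ∂K := by
      intro h t
      refine int_prod K _ _ ?_ ((hBm h).mul (by fun_prop)) (fun z => sq_nonneg _) ?_
      · have h1 := hmeasP β
        have h2 := hmeasP (β + h)
        fun_prop
      · intro x
        refine hs_conv (hasSum_BB (∑ i, x i * β i) (∑ i, x i * (β + h) i) (∑ i, x i * t i))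
          ?_ rfl
        intro y
        simp only [hfac]
    simp only [key]
    have hdom : ∀ᶠ h : Fin p → ℝ in 𝓝 0, ∀ x : Fin p → ℝ,
        ‖p * (BB (∑ i, x i * β i) (∑ i, x i * (β + h) i) * ∑ i, x i ^ 2)‖ ≤
          4 * p * (D x * ∑ i, x i ^ 2) := by
      filter_upwards [hev] with h hh x
      have h1 := BB_nonneg (∑ i, x i * β i) (∑ i, x i * (β + h) i)
      have h2 := hS0 x
      rw [Real.norm_eq_abs, abs_of_nonneg (by positivity)]
      calc _ ≤ p * ((4 * D x) * ∑ i, x i ^ 2) := by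
            gcongr
            exact BB_le _ _ _ (hexp0 x) (hh x)
        _ = _ := by ring
    have hlim : Tendsto (fun h : Fin p → ℝ =>
        ∫ x, p * (BB (∑ i, x i * β i) (∑ i, x i * (β + h) i) * ∑ i, x i ^ 2) ∂K) (𝓝 0) (𝓝 0) := by
      have h0 : (0:ℝ) = ∫ _x : Fin p → ℝ, (0:ℝ) ∂K := by simp
      conv => arg 3; rw [h0]
      refine tendsto_integral_filter_of_dominated_convergence
        (fun x => 4 * p * (D x * ∑ i, x i ^ 2)) ?_ ?_ (hI'.const_mul _) ?_
      · refine .of_forall fun h => Measurable.aestronglyMeasurable ?_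
        have := hBm h
        fun_prop
      · filter_upwards [hdom] with h hh
        exact .of_forall hh
      · refine .of_forall fun x => ?_
        have : Continuous (fun h : Fin p → ℝ =>
            p * (BB (∑ i, x i * β i) (∑ i, x i * (β + h) i) * ∑ i, x i ^ 2)) := by
          unfold BB; fun_prop
        have h2 := this.tendsto 0
        have h3 : BB (∑ i, x i * β i) (∑ i, x i * β i) = 0 := by
          unfold BB; simp; ring
        simpa [h3] using h2
    refine squeeze_zero' (.of_forall fun h => Real.iSup_nonneg fun t =>
      integral_nonneg fun x => mul_nonneg (BB_nonneg _ _) (sq_nonneg _)) ?_ hlim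
    filter_upwards [hdom] with h hh
    haveI : Nonempty {t : Fin p → ℝ // ‖t‖ ≤ 1} := ⟨⟨0, by simp⟩⟩
    refine ciSup_le fun t => ?_
    refine integral_mono_of_nonneg
      (.of_forall fun x => mul_nonneg (BB_nonneg _ _) (sq_nonneg _)) ?_ (.of_forall fun x => ?_)
    · refine (hI'.const_mul (4 * p : ℝ)).mono' (Measurable.aestronglyMeasurable ?_)
        (.of_forall hh)
      have := hBm h
      fun_prop
    · have h1 := BB_nonneg (∑ i, x i * β i) (∑ i, x i * (β + h) i)
      have h2 := hS0 x
      have h3 : (∑ i, x i * t.1 i)^2 ≤ (∑ i, x i ^ 2) * p := by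
        refine (dot_sq_le x t.1).trans ?_
        have : ‖t.1‖^2 ≤ 1 := pow_le_one₀ (norm_nonneg _) t.2
        have : p * ‖t.1‖^2 ≤ (p:ℝ) := mul_le_of_le_one_right (by positivity) this
        gcongr
      refine (mul_le_mul_of_nonneg_left h3 h1).trans (le_of_eq (by ring))
end
end

section
/- Shape-link construction for the GEVD: Let a₃ = e^{−1/2}, let a₂ > 1 be a solution of a₂^{a₂} = e^{2(1 − e^{−1/2})}, and let a₁ = a₂ (log a₂)³ / 2. Define f: ℝ → ℝ by f(x) = x²/2 + x + 1 for x > 0 and f(x) = a₁/(log(a₂ − x))² + a₃ for x ≤ 0. Then: (a) the constants satisfy a₁/(log a₂)² + a₃ = 1 and 2a₁/(a₂ (log a₂)³) = 1; (b) f is continuously differentiable on ℝ, with f′(x) = (x + 1) for the quadratic part's derivative x + 1 when x > 0 and f′(x) = 2a₁/((a₂ − x)(log(a₂ − x))³) when x < 0, matching at 0; (c) f is strictly increasing; and (d) f(x) > e^{−1/2} for all x ∈ ℝ. -/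
open Real

noncomputable section

/-- **Shape-link construction for the GEVD.**
With `a₃ = e^{-1/2}`, `a₂ > 1` a solution of `a₂ ^ a₂ = e^{2(1 - e^{-1/2})}` and
`a₁ = a₂ (log a₂)³ / 2`, the function `f` defined by `f x = x²/2 + x + 1` for `x > 0`
and `f x = a₁ / (log (a₂ - x))² + a₃` for `x ≤ 0` satisfies:
(a) `a₁/(log a₂)² + a₃ = 1` and `2a₁/(a₂ (log a₂)³) = 1`;
(b) `f` is continuously differentiable with the indicated derivatives, matching at `0`;
(c) `f` is strictly increasing; (d) `f x > e^{-1/2}` for all `x`. -/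
theorem gevd_shape_link
    (a₁ a₂ a₃ : ℝ)
    (ha₂ : 1 < a₂)
    (ha₂eq : a₂ ^ a₂ = Real.exp (2 * (1 - Real.exp (-(1 / 2)))))
    (ha₃ : a₃ = Real.exp (-(1 / 2)))
    (ha₁ : a₁ = a₂ * (Real.log a₂) ^ 3 / 2)
    (f : ℝ → ℝ)
    (hf : ∀ x : ℝ, f x = if 0 < x then x ^ 2 / 2 + x + 1
        else a₁ / (Real.log (a₂ - x)) ^ 2 + a₃) :
    (a₁ / (Real.log a₂) ^ 2 + a₃ = 1 ∧ 2 * a₁ / (a₂ * (Real.log a₂) ^ 3) = 1) ∧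
    (ContDiff ℝ 1 f ∧
      (∀ x : ℝ, 0 < x → deriv f x = x + 1) ∧
      (∀ x : ℝ, x < 0 → deriv f x = 2 * a₁ / ((a₂ - x) * (Real.log (a₂ - x)) ^ 3)) ∧
      deriv f 0 = 1) ∧
    StrictMono f ∧
    (∀ x : ℝ, Real.exp (-(1 / 2)) < f x) := by
  have hL : 0 < Real.log a₂ := Real.log_pos ha₂
  have h0 : 0 < a₂ := by linarith
  have ha1pos : 0 < a₁ := by rw [ha₁]; positivity
  have hlog : a₂ * Real.log a₂ = 2 * (1 - Real.exp (-(1 / 2))) := by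
    have := congrArg Real.log ha₂eq
    rwa [Real.log_rpow h0, Real.log_exp] at this
  have hA : a₁ / (Real.log a₂) ^ 2 + a₃ = 1 := by
    have : a₁ / (Real.log a₂) ^ 2 = a₂ * Real.log a₂ / 2 := by
      rw [ha₁]; field_simp
    rw [this, hlog, ha₃]; ring
  have hB : 2 * a₁ / (a₂ * (Real.log a₂) ^ 3) = 1 := by
    rw [ha₁]; field_simp
  have hlp : ∀ x : ℝ, x ≤ 0 → 0 < Real.log (a₂ - x) := fun x hx =>
    Real.log_pos (by linarith)
  have hq : ∀ x : ℝ, HasDerivAt (fun x : ℝ => x ^ 2 / 2 + x + 1) (x + 1) x := by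
    intro x
    have := ((((hasDerivAt_id x).pow 2).div_const 2).add (hasDerivAt_id x)).add_const 1
    refine (this.congr_deriv ?_)
    simp
  have hh : ∀ x : ℝ, x ≤ 0 → HasDerivAt (fun x : ℝ => a₁ / (Real.log (a₂ - x)) ^ 2 + a₃)
      (2 * a₁ / ((a₂ - x) * (Real.log (a₂ - x)) ^ 3)) x := by
    intro x hx
    have hl := hlp x hx
    have hp : 0 < a₂ - x := by linarith
    have h1 : HasDerivAt (fun x : ℝ => Real.log (a₂ - x)) (-1 / (a₂ - x)) x :=
      ((hasDerivAt_id x).const_sub a₂).log hp.ne'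
    have := (((hasDerivAt_const x a₁).div (h1.pow 2) (pow_pos hl 2).ne')).add_const a₃
    refine this.congr_deriv ?_
    simp
    field_simp
  have hfpos : ∀ x : ℝ, 0 < x → HasDerivAt f (x + 1) x := by
    intro x hx
    refine (hq x).congr_of_eventuallyEq ?_
    filter_upwards [Ioi_mem_nhds hx] with y hy
    rw [hf, if_pos (Set.mem_Ioi.mp hy)]
  have hfneg : ∀ x : ℝ, x < 0 →
      HasDerivAt f (2 * a₁ / ((a₂ - x) * (Real.log (a₂ - x)) ^ 3)) x := by
    intro x hx
    refine (hh x hx.le).congr_of_eventuallyEq ?_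
    filter_upwards [Iio_mem_nhds hx] with y hy
    rw [hf, if_neg (not_lt.mpr (le_of_lt hy))]
  have hf0 : HasDerivAt f 1 0 := by
    have hl : HasDerivWithinAt f 1 (Set.Iic 0) 0 := by
      have := (hh 0 le_rfl).hasDerivWithinAt (s := Set.Iic 0)
      rw [sub_zero, hB] at this
      refine this.congr ?_ ?_
      · intro y hy
        rw [hf, if_neg (not_lt.mpr hy)]
      · rw [hf, if_neg (lt_irrefl _)]
    have hr : HasDerivWithinAt f 1 (Set.Ici 0) 0 := by
      have := (hq 0).hasDerivWithinAt (s := Set.Ici 0)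
      rw [zero_add] at this
      have e0 : f 0 = (0:ℝ) ^ 2 / 2 + 0 + 1 := by
        rw [hf, if_neg (lt_irrefl _), sub_zero, hA]; norm_num
      refine this.congr ?_ e0
      intro y hy
      rcases eq_or_lt_of_le (Set.mem_Ici.mp hy) with h | h
      · rw [← h]; exact e0
      · rw [hf, if_pos h]
    have := hl.union hr
    rwa [Set.Iic_union_Ici, hasDerivWithinAt_univ] at this
  have hd : ∀ x : ℝ, DifferentiableAt ℝ f x := by
    intro x
    rcases lt_trichotomy x 0 with h | h | h
    · exact (hfneg x h).differentiableAt
    · rw [h]; exact hf0.differentiableAt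
    · exact (hfpos x h).differentiableAt
  have hderiv : deriv f = fun x => max x 0 +
      2 * a₁ / ((a₂ - min x 0) * (Real.log (a₂ - min x 0)) ^ 3) := by
    funext x
    rcases lt_trichotomy x 0 with h | h | h
    · rw [(hfneg x h).deriv, max_eq_right h.le, min_eq_left h.le, zero_add]
    · rw [h, hf0.deriv, max_self, min_self, sub_zero, hB, zero_add]
    · rw [(hfpos x h).deriv, max_eq_left h.le, min_eq_right h.le, sub_zero, hB]
  have hterm : ∀ x : ℝ, 0 < (a₂ - min x 0) * (Real.log (a₂ - min x 0)) ^ 3 := fun x =>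
    mul_pos (by linarith [min_le_right x 0]) (pow_pos (hlp _ (min_le_right x 0)) 3)
  have hmono : StrictMono f := by
    apply strictMono_of_deriv_pos
    intro x
    rw [hderiv]
    have := hterm x
    have h2 := le_max_right x 0
    have : 0 < 2 * a₁ / ((a₂ - min x 0) * (Real.log (a₂ - min x 0)) ^ 3) := by positivity
    show 0 < max x 0 + _
    linarith
  refine ⟨⟨hA, hB⟩, ⟨?_, fun x hx => (hfpos x hx).deriv, fun x hx => (hfneg x hx).deriv,
    hf0.deriv⟩, hmono, ?_⟩
  · rw [contDiff_one_iff_deriv]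
    refine ⟨hd, ?_⟩
    rw [hderiv]
    have hc : Continuous fun x : ℝ => a₂ - min x 0 := by fun_prop
    have hlc : Continuous fun x : ℝ => Real.log (a₂ - min x 0) :=
      hc.log fun x => (show 0 < a₂ - min x 0 by linarith [min_le_right x 0]).ne'
    exact (continuous_id.max continuous_const).add
      (continuous_const.div (hc.mul (hlc.pow 3)) fun x => (hterm x).ne')
  · have hneg : ∀ x : ℝ, x ≤ 0 → Real.exp (-(1 / 2)) < f x := by
      intro x hx
      rw [hf, if_neg (not_lt.mpr hx), ← ha₃]
      have := hlp x hx
      have : 0 < a₁ / (Real.log (a₂ - x)) ^ 2 := by positivity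
      linarith
    intro x
    rcases le_or_gt x 0 with h | h
    · exact hneg x h
    · exact (hneg 0 le_rfl).trans (hmono h)
end
end
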